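/- Let k ≥ 2 be an integer and δ > 0 a constant. There exists a deterministic online strategy for Builder such that, with high probability, Builder purchases at most (k/2 + 2^{−k} + δ)·n edges among e_1, …, e_{τ_k} and her graph B_{τ_k} has minimum degree at least k. -/

import Mathlib

open Finset Filter

namespace RGP

/-- Number of edges of the complete graph on `n` vertices. -/
def numEdges (n : ℕ) : ℕ := n * (n - 1) / 2

/-- An edge of the complete graph on `Fin n` (an unordered pair of distinct vertices). -/
abbrev EdgeType (n : ℕ) := {e : Sym2 (Fin n) // ¬ e.IsDiag}

/-- A uniformly random permutation of the edges of `K_n` is modelled by a bijection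
`σ` between positions `Fin (numEdges n)` and edges; `σ i` is the edge `e_{i+1}`. -/
abbrev Ord (n : ℕ) := Fin (numEdges n) ≃ EdgeType n

/-- Degree of a vertex `v` in a set `S` of edges. -/
def deg {n : ℕ} (S : Finset (Sym2 (Fin n))) (v : Fin n) : ℕ :=
  (S.filter (fun e => v ∈ e)).card

/-- The edge set `{e_1, …, e_m}` of `G_{n,m}` in the random graph process `σ`. -/
def procEdges {n : ℕ} (σ : Ord n) (m : ℕ) : Finset (Sym2 (Fin n)) :=
  (Finset.univ.filter (fun i : Fin (numEdges n) => (i : ℕ) < m)).image (fun i => (σ i).1)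

/-- The hitting time `τ_k` for minimum degree at least `k`. -/
noncomputable def tau {n : ℕ} (k : ℕ) (σ : Ord n) : ℕ :=
  sInf {m | ∀ v : Fin n, k ≤ deg (procEdges σ m) v}

open scoped Classical in
/-- The probability of an event under the uniformly random edge ordering. -/
noncomputable def Pr {n : ℕ} (p : Ord n → Prop) : ℝ :=
  ((Finset.univ : Finset (Ord n)).filter p).card / (Fintype.card (Ord n) : ℝ)

/-- A deterministic online strategy: given the sequence of edges revealed so far
(the last entry being the edge just revealed), decide whether to purchase it. -/
abbrev Strategy (n : ℕ) := List (Sym2 (Fin n)) → Bool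

/-- The list of the first `i` revealed edges `e_1, …, e_i`. -/
def prefixList {n : ℕ} (σ : Ord n) (i : ℕ) : List (Sym2 (Fin n)) :=
  (List.range i).filterMap (fun j => if h : j < numEdges n then some (σ ⟨j, h⟩).1 else none)

/-- `buy st σ i` is the edge set of Builder's graph `B_i`: the edges purchased by the
strategy `st` among `e_1, …, e_i`. -/
def buy {n : ℕ} (st : Strategy n) (σ : Ord n) : ℕ → Finset (Sym2 (Fin n))
  | 0 => ∅
  | i + 1 =>
    if h : i < numEdges n then
      if st (prefixList σ (i + 1)) then insert (σ ⟨i, h⟩).1 (buy st σ i)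
      else buy st σ i
    else buy st σ i

end RGP


namespace RGP

/-! ### Expectations -/

/-- Expectation under a uniformly random edge ordering. -/
noncomputable def Ex {n : ℕ} (f : Ord n → ℝ) : ℝ :=
  (∑ σ, f σ) / (Fintype.card (Ord n) : ℝ)

lemma card_edgeType (n : ℕ) : Fintype.card (EdgeType n) = numEdges n := by
  have := Sym2.card_subtype_not_diag (α := Fin n)
  rw [Fintype.card_fin, Nat.choose_two_right] at this
  unfold numEdges
  rw [← this]

instance ordNonempty (n : ℕ) : Nonempty (Ord n) :=
  ⟨(Fintype.equivFinOfCardEq (card_edgeType n)).symm⟩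

lemma card_ord_pos (n : ℕ) : (0 : ℝ) < (Fintype.card (Ord n) : ℝ) := by
  exact_mod_cast Fintype.card_pos

lemma Ex_mono {n : ℕ} {f g : Ord n → ℝ} (h : ∀ σ, f σ ≤ g σ) : Ex f ≤ Ex g := by
  unfold Ex
  gcongr with σ
  exact h σ

lemma Ex_const {n : ℕ} (c : ℝ) : Ex (fun _ : Ord n => c) = c := by
  unfold Ex
  have := card_ord_pos n
  simp only [sum_const, card_univ, nsmul_eq_mul]
  field_simp

lemma Ex_add {n : ℕ} (f g : Ord n → ℝ) : Ex (fun σ => f σ + g σ) = Ex f + Ex g := by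
  unfold Ex
  rw [sum_add_distrib, add_div]

lemma Ex_sub {n : ℕ} (f g : Ord n → ℝ) : Ex (fun σ => f σ - g σ) = Ex f - Ex g := by
  unfold Ex
  rw [sum_sub_distrib, sub_div]

lemma Ex_mul_left {n : ℕ} (c : ℝ) (f : Ord n → ℝ) : Ex (fun σ => c * f σ) = c * Ex f := by
  unfold Ex
  rw [← mul_sum, mul_div_assoc]

lemma Ex_sum {n : ℕ} {ι : Type*} (s : Finset ι) (f : ι → Ord n → ℝ) :
    Ex (fun σ => ∑ i ∈ s, f i σ) = ∑ i ∈ s, Ex (f i) := by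
  unfold Ex
  rw [sum_comm, sum_div]

open scoped Classical in
lemma Pr_eq_Ex {n : ℕ} (p : Ord n → Prop) : Pr p = Ex (fun σ => if p σ then (1 : ℝ) else 0) := by
  unfold Pr Ex
  congr 1
  simp

lemma Pr_nonneg {n : ℕ} (p : Ord n → Prop) : 0 ≤ Pr p := by
  unfold Pr; positivity

lemma Pr_mono {n : ℕ} {p q : Ord n → Prop} (h : ∀ σ, p σ → q σ) : Pr p ≤ Pr q := by
  classical
  rw [Pr_eq_Ex, Pr_eq_Ex]
  apply Ex_mono
  intro σ
  by_cases hp : p σ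
  · simp [hp, h σ hp]
  · simp only [hp, if_false]; split_ifs <;> norm_num

lemma Pr_le_one {n : ℕ} (p : Ord n → Prop) : Pr p ≤ 1 := by
  classical
  rw [Pr_eq_Ex]
  refine le_trans (Ex_mono (g := fun _ => 1) ?_) (Ex_const (n := n) 1).le
  intro σ
  split_ifs <;> norm_num

lemma Pr_or {n : ℕ} (p q : Ord n → Prop) : Pr (fun σ => p σ ∨ q σ) ≤ Pr p + Pr q := by
  classical
  rw [Pr_eq_Ex, Pr_eq_Ex, Pr_eq_Ex, ← Ex_add]
  apply Ex_mono
  intro σ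
  by_cases hp : p σ <;> by_cases hq : q σ <;> simp [hp, hq]

lemma Pr_compl {n : ℕ} (p : Ord n → Prop) : Pr p = 1 - Pr (fun σ => ¬ p σ) := by
  classical
  rw [Pr_eq_Ex, Pr_eq_Ex, eq_sub_iff_add_eq, ← Ex_add]
  refine Eq.trans ?_ (Ex_const (n := n) 1)
  congr 1
  funext σ
  by_cases hp : p σ <;> simp [hp]

lemma Pr_exists_le {n : ℕ} {ι : Type*} (s : Finset ι) (p : ι → Ord n → Prop) :
    Pr (fun σ => ∃ i ∈ s, p i σ) ≤ ∑ i ∈ s, Pr (p i) := by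
  classical
  simp_rw [Pr_eq_Ex]
  rw [← Ex_sum]
  apply Ex_mono
  intro σ
  split_ifs with h
  · obtain ⟨i, hi, hp⟩ := h
    calc (1 : ℝ) = if p i σ then 1 else 0 := by simp [hp]
      _ ≤ _ := single_le_sum (f := fun i => if p i σ then (1 : ℝ) else 0)
          (fun j _ => by split_ifs <;> norm_num) hi
  · exact sum_nonneg (fun j _ => by split_ifs <;> norm_num)

/-- Markov's inequality. -/
lemma markov {n : ℕ} (f : Ord n → ℝ) (hf : ∀ σ, 0 ≤ f σ) (c : ℝ) (hc : 0 < c)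
    (p : Ord n → Prop) (hp : ∀ σ, p σ → c ≤ f σ) : Pr p ≤ Ex f / c := by
  classical
  rw [le_div_iff₀ hc, mul_comm, Pr_eq_Ex, ← Ex_mul_left]
  apply Ex_mono
  intro σ
  split_ifs with h
  · simpa using hp σ h
  · simpa using hf σ

/-! ### Exchangeability: the next edge is uniform among the unrevealed edges -/

lemma Ex_swap {n : ℕ} (i j : Fin (numEdges n)) (f : Ord n → ℝ) :
    Ex (fun σ => f ((Equiv.swap i j).trans σ)) = Ex f := by
  unfold Ex
  congr 1
  have h : Function.Involutive (fun σ : Ord n => (Equiv.swap i j).trans σ) := by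
    intro σ
    ext x
    simp
  exact Fintype.sum_equiv h.toPerm _ _ (fun σ => rfl)

/-- Averaging over the next edge. -/
lemma Ex_step {n : ℕ} (i : Fin (numEdges n)) (f : Ord n → EdgeType n → ℝ)
    (hf : ∀ σ (j : Fin (numEdges n)), i ≤ j → f ((Equiv.swap i j).trans σ) = f σ) :
    ((numEdges n : ℝ) - (i : ℕ)) * Ex (fun σ => f σ (σ i)) =
      Ex (fun σ => ∑ j ∈ univ.filter (fun j => i ≤ j), f σ (σ j)) := by
  rw [Ex_sum]
  have h1 : ∀ j ∈ univ.filter (fun j : Fin (numEdges n) => i ≤ j),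
      Ex (fun σ => f σ (σ j)) = Ex (fun σ => f σ (σ i)) := by
    intro j hj
    rw [mem_filter] at hj
    rw [← Ex_swap i j (fun σ => f σ (σ i))]
    congr 1
    funext σ
    rw [hf σ j hj.2]
    simp
  rw [sum_congr rfl h1, sum_const, nsmul_eq_mul]
  congr 1
  have : (univ.filter (fun j : Fin (numEdges n) => i ≤ j)) = Finset.Ici i := by
    ext; simp
  rw [this, Fin.card_Ici]
  rw [Nat.cast_sub i.2.le]

end RGP


namespace RGP

/-! ### Rule-based strategies -/

/-- A rule: given the time, Builder's current graph and the new edge, purchase or not. -/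
abbrev Rule (n : ℕ) := ℕ → Finset (Sym2 (Fin n)) → Sym2 (Fin n) → Prop

open scoped Classical in
/-- Builder's graph after one step. -/
noncomputable def stepB {n : ℕ} (R : Rule n) (i : ℕ) (B : Finset (Sym2 (Fin n)))
    (e : Sym2 (Fin n)) : Finset (Sym2 (Fin n)) :=
  if R i B e then insert e B else B

/-- Builder's graph at time `i`, when following the rule `R`. -/
noncomputable def run {n : ℕ} (R : Rule n) (σ : Ord n) : ℕ → Finset (Sym2 (Fin n))
  | 0 => ∅
  | i + 1 => if h : i < numEdges n then stepB R i (run R σ i) (σ ⟨i, h⟩).1 else run R σ i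

/-- Builder's state computed from a list of edges. -/
noncomputable def runL {n : ℕ} (R : Rule n) (L : List (Sym2 (Fin n))) :
    ℕ × Finset (Sym2 (Fin n)) :=
  L.foldl (fun s e => (s.1 + 1, stepB R s.1 s.2 e)) (0, ∅)

open scoped Classical in
/-- The online strategy given by a rule. -/
noncomputable def stOf {n : ℕ} (R : Rule n) : Strategy n := fun L =>
  match L.getLast? with
  | none => false
  | some e => decide (R (runL R L.dropLast).1 (runL R L.dropLast).2 e)

lemma prefixList_succ {n : ℕ} (σ : Ord n) (i : ℕ) (h : i < numEdges n) :
    prefixList σ (i + 1) = prefixList σ i ++ [(σ ⟨i, h⟩).1] := by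
  unfold prefixList
  rw [List.range_succ, List.filterMap_append]
  simp [h]

lemma runL_prefix {n : ℕ} (R : Rule n) (σ : Ord n) (i : ℕ) (hi : i ≤ numEdges n) :
    runL R (prefixList σ i) = (i, run R σ i) := by
  induction i with
  | zero => simp [runL, prefixList, run]
  | succ i ih =>
    have h : i < numEdges n := hi
    rw [prefixList_succ σ i h]
    have ih' := ih h.le
    unfold runL at ih' ⊢
    rw [List.foldl_append, ih']
    simp [run, h]

lemma buy_stOf {n : ℕ} (R : Rule n) (σ : Ord n) (i : ℕ) :
    buy (stOf R) σ i = run R σ i := by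
  induction i with
  | zero => simp [buy, run]
  | succ i ih =>
    by_cases h : i < numEdges n
    · have h1 : stOf R (prefixList σ (i + 1)) = true ↔ R i (run R σ i) (σ ⟨i, h⟩).1 := by
        rw [prefixList_succ σ i h]
        unfold stOf
        simp [runL_prefix R σ i h.le]
      unfold buy run stepB
      simp only [h, dif_pos, ih]
      by_cases hR : R i (run R σ i) (σ ⟨i, h⟩).1
      · rw [if_pos hR, if_pos (h1.2 hR)]
      · rw [if_neg hR, if_neg (fun h2 => hR (h1.1 h2))]
    · simp [buy, run, h, ih]

lemma run_succ {n : ℕ} (R : Rule n) (σ : Ord n) (i : ℕ) (h : i < numEdges n) :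
    run R σ (i + 1) = stepB R i (run R σ i) (σ ⟨i, h⟩).1 := by
  simp [run, h]

lemma run_succ_of_le {n : ℕ} (R : Rule n) (σ : Ord n) (i : ℕ) (h : ¬ i < numEdges n) :
    run R σ (i + 1) = run R σ i := by
  simp [run, h]

lemma subset_stepB {n : ℕ} (R : Rule n) (i : ℕ) (B : Finset (Sym2 (Fin n)))
    (e : Sym2 (Fin n)) : B ⊆ stepB R i B e := by
  unfold stepB
  split_ifs
  · exact subset_insert _ _
  · exact Subset.refl _

lemma run_mono {n : ℕ} (R : Rule n) (σ : Ord n) : Monotone (run R σ) := by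
  apply monotone_nat_of_le_succ
  intro i
  by_cases h : i < numEdges n
  · rw [run_succ R σ i h]; exact subset_stepB _ _ _ _
  · rw [run_succ_of_le R σ i h]

lemma deg_mono {n : ℕ} {B C : Finset (Sym2 (Fin n))} (h : B ⊆ C) (v : Fin n) :
    deg B v ≤ deg C v :=
  card_le_card (filter_subset_filter _ h)

lemma mem_run {n : ℕ} (R : Rule n) (σ : Ord n) (i : ℕ) (e : Sym2 (Fin n))
    (he : e ∈ run R σ i) : ∃ j : Fin (numEdges n), (j : ℕ) < i ∧ (σ j).1 = e := by
  induction i with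
  | zero => simp [run] at he
  | succ i ih =>
    by_cases h : i < numEdges n
    · rw [run_succ R σ i h] at he
      unfold stepB at he
      have : e = (σ ⟨i, h⟩).1 ∨ e ∈ run R σ i := by
        split_ifs at he
        · exact mem_insert.1 he
        · exact Or.inr he
      rcases this with h1 | h1
      · exact ⟨⟨i, h⟩, Nat.lt_succ_self i, h1.symm⟩
      · obtain ⟨j, hj, hj'⟩ := ih h1
        exact ⟨j, by omega, hj'⟩
    · rw [run_succ_of_le R σ i h] at he
      obtain ⟨j, hj, hj'⟩ := ih he
      exact ⟨j, by omega, hj'⟩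

lemma not_mem_run {n : ℕ} (R : Rule n) (σ : Ord n) (i : ℕ) (j : Fin (numEdges n))
    (hj : i ≤ (j : ℕ)) : (σ j).1 ∉ run R σ i := by
  intro h
  obtain ⟨l, hl, hl'⟩ := mem_run R σ i _ h
  have := σ.injective (Subtype.ext hl')
  subst this
  omega

lemma run_swap_aux {n : ℕ} (R : Rule n) (σ : Ord n) (i j : Fin (numEdges n)) (hij : i ≤ j)
    (l : ℕ) (hl : l ≤ (i : ℕ)) : run R ((Equiv.swap i j).trans σ) l = run R σ l := by
  induction l with
  | zero => simp [run]
  | succ l ih =>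
    have h : l < numEdges n := by have := i.2; omega
    have hij' : (i : ℕ) ≤ (j : ℕ) := hij
    rw [run_succ _ _ _ h, run_succ _ _ _ h, ih (by omega)]
    congr 2
    rw [Equiv.trans_apply, Equiv.swap_apply_of_ne_of_ne]
    · intro h'; rw [← h'] at hl; simp at hl
    · intro h'; rw [← h'] at hij'; simp only at hij'; omega

lemma run_swap {n : ℕ} (R : Rule n) (σ : Ord n) (i j : Fin (numEdges n)) (hij : i ≤ j) :
    run R ((Equiv.swap i j).trans σ) i = run R σ i :=
  run_swap_aux R σ i j hij i le_rfl

/-- One-step drift bound. -/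
lemma drift {n : ℕ} (R : Rule n) (i : ℕ) (hi : i < numEdges n)
    (Φ Φ' : Finset (Sym2 (Fin n)) → ℝ)
    (h : ∀ σ : Ord n, ∑ j ∈ univ.filter (fun j : Fin (numEdges n) => ⟨i, hi⟩ ≤ j),
      Φ (stepB R i (run R σ i) (σ j).1) ≤ ((numEdges n : ℝ) - i) * Φ' (run R σ i)) :
    Ex (fun σ : Ord n => Φ (run R σ (i + 1))) ≤ Ex (fun σ : Ord n => Φ' (run R σ i)) := by
  have hpos : (0 : ℝ) < (numEdges n : ℝ) - i := by
    have : (i : ℝ) < numEdges n := by exact_mod_cast hi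
    linarith
  have key := Ex_step (⟨i, hi⟩ : Fin (numEdges n))
    (fun σ e => Φ (stepB R i (run R σ i) e.1)) (by
      intro σ j hij
      funext e
      have := run_swap R σ ⟨i, hi⟩ j hij
      simp only at this
      rw [this])
  have h2 := Ex_mono h
  rw [Ex_mul_left, ← key] at h2
  have h3 := le_of_mul_le_mul_left h2 hpos
  simp_rw [run_succ R _ i hi]
  exact h3

/-! ### Degrees -/

lemma deg_insert {n : ℕ} (B : Finset (Sym2 (Fin n))) (e : Sym2 (Fin n)) (he : e ∉ B)
    (v : Fin n) : deg (insert e B) v = deg B v + if v ∈ e then 1 else 0 := by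
  unfold deg
  rw [filter_insert]
  split_ifs with h
  · rw [card_insert_of_notMem]
    simp [he]
  · simp

lemma sum_deg {n : ℕ} (B : Finset (Sym2 (Fin n))) (hB : ∀ e ∈ B, ¬ e.IsDiag) :
    ∑ v, deg B v = 2 * B.card := by
  induction B using Finset.induction_on with
  | empty => simp [deg]
  | insert e B he ih =>
    simp_rw [deg_insert B e he]
    rw [sum_add_distrib, ih (fun e' h' => hB e' (mem_insert_of_mem h')), card_insert_of_notMem he]
    have : (∑ v : Fin n, if v ∈ e then 1 else 0) = 2 := by
      have hd := hB e (mem_insert_self _ _)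
      induction e using Sym2.ind with
      | _ u v =>
        have huv : u ≠ v := by simpa using hd
        rw [← Finset.card_filter]
        have : univ.filter (fun w => w ∈ s(u, v)) = {u, v} := by
          ext w; simp
        rw [this, card_pair huv]
    rw [this]; ring

lemma run_not_diag {n : ℕ} (R : Rule n) (σ : Ord n) (i : ℕ) :
    ∀ e ∈ run R σ i, ¬ e.IsDiag := by
  intro e he
  obtain ⟨j, _, hj⟩ := mem_run R σ i e he
  rw [← hj]; exact (σ j).2

/-- Number of edges at `v` at positions in `[a, b)`. -/
def cnt {n : ℕ} (σ : Ord n) (v : Fin n) (a b : ℕ) : ℕ :=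
  (univ.filter (fun j : Fin (numEdges n) => a ≤ (j : ℕ) ∧ (j : ℕ) < b ∧ v ∈ (σ j).1)).card

lemma deg_procEdges {n : ℕ} (σ : Ord n) (m : ℕ) (v : Fin n) :
    deg (procEdges σ m) v = cnt σ v 0 m := by
  unfold deg procEdges cnt
  rw [filter_image, card_image_of_injective]
  · rw [filter_filter]; simp
  · intro a b h
    exact σ.injective (Subtype.ext h)

lemma cnt_succ {n : ℕ} (σ : Ord n) (v : Fin n) (a b : ℕ) (hab : a ≤ b) (hb : b < numEdges n) :
    cnt σ v a (b + 1) = cnt σ v a b + if v ∈ (σ ⟨b, hb⟩).1 then 1 else 0 := by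
  unfold cnt
  split_ifs with h
  · rw [← card_insert_of_notMem (a := (⟨b, hb⟩ : Fin (numEdges n)))]
    · congr 1
      ext j
      simp only [mem_filter, mem_univ, true_and, mem_insert]
      constructor
      · rintro ⟨h1, h2, h3⟩
        by_cases hj : (j : ℕ) = b
        · left; exact Fin.ext hj
        · right; exact ⟨h1, by omega, h3⟩
      · rintro (rfl | ⟨h1, h2, h3⟩)
        · exact ⟨hab, by simp, h⟩
        · exact ⟨h1, by omega, h3⟩
    · simp
  · rw [add_zero]
    congr 1
    ext j
    simp only [mem_filter, mem_univ, true_and]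
    constructor
    · rintro ⟨h1, h2, h3⟩
      refine ⟨h1, ?_, h3⟩
      by_contra hj
      have : j = ⟨b, hb⟩ := Fin.ext (by simp only; omega)
      rw [this] at h3
      exact h h3
    · rintro ⟨h1, h2, h3⟩
      exact ⟨h1, by omega, h3⟩

lemma cnt_succ_of_le {n : ℕ} (σ : Ord n) (v : Fin n) (a b : ℕ) (hb : ¬ b < numEdges n) :
    cnt σ v a (b + 1) = cnt σ v a b := by
  unfold cnt
  congr 1
  ext j
  have := j.2
  simp only [mem_filter, mem_univ, true_and]
  constructor
  · rintro ⟨h1, h2, h3⟩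
    exact ⟨h1, by omega, h3⟩
  · rintro ⟨h1, h2, h3⟩
    exact ⟨h1, by omega, h3⟩

/-! ### The concrete rule -/

/-- Builder's rule: before time `M₁` buy edges with an isolated endpoint; before time `M₂`
buy edges with an isolated endpoint or with both endpoints of degree less than `k`; from then
on buy edges with an endpoint of degree less than `k`. -/
def theRule (n k M₁ M₂ : ℕ) : Rule n := fun i B e =>
  if i < M₁ then ∃ v ∈ e, deg B v = 0
  else if i < M₂ then (∃ v ∈ e, deg B v = 0) ∨ ∀ v ∈ e, deg B v < k
  else ∃ v ∈ e, deg B v < k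

lemma theRule_of_isolated {n k M₁ M₂ : ℕ} (hk : 1 ≤ k) (i : ℕ) (B : Finset (Sym2 (Fin n)))
    (e : Sym2 (Fin n)) (h : ∃ v ∈ e, deg B v = 0) : theRule n k M₁ M₂ i B e := by
  unfold theRule
  split_ifs
  · exact h
  · exact Or.inl h
  · obtain ⟨v, hv, h0⟩ := h
    exact ⟨v, hv, by omega⟩

lemma revealed_pos {n k M₁ M₂ : ℕ} (hk : 1 ≤ k) (σ : Ord n) (i : ℕ) (j : Fin (numEdges n))
    (hj : (j : ℕ) < i) (v : Fin n) (hv : v ∈ (σ j).1) :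
    1 ≤ deg (run (theRule n k M₁ M₂) σ i) v := by
  set R := theRule n k M₁ M₂
  have h1 : 1 ≤ deg (run R σ ((j : ℕ) + 1)) v := by
    rw [run_succ R σ j j.2]
    unfold stepB
    split_ifs with h
    · rw [deg_insert _ _ (not_mem_run R σ j j le_rfl)]
      simp [hv]
    · by_contra h0
      exact h (theRule_of_isolated hk _ _ _ ⟨v, hv, by simpa using h0⟩)
  exact h1.trans (deg_mono (run_mono R σ hj) v)

lemma late_deg {n k M₁ M₂ : ℕ} (hM : M₁ ≤ M₂) (σ : Ord n) (i : ℕ) (hi : M₂ ≤ i) (v : Fin n) :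
    min k (deg (run (theRule n k M₁ M₂) σ M₂) v + cnt σ v M₂ i) ≤
      deg (run (theRule n k M₁ M₂) σ i) v := by
  set R := theRule n k M₁ M₂ with hR
  induction i, hi using Nat.le_induction with
  | base =>
    have : cnt σ v M₂ M₂ = 0 := by
      unfold cnt
      rw [card_eq_zero, filter_eq_empty_iff]
      intro j _ h
      omega
    rw [this]; simp
  | succ i hi ih =>
    by_cases h : i < numEdges n
    · rw [cnt_succ σ v M₂ i hi h, run_succ R σ i h]
      unfold stepB
      by_cases hr : R i (run R σ i) (σ ⟨i, h⟩).1
      · rw [if_pos hr, deg_insert _ _ (not_mem_run R σ i ⟨i, h⟩ le_rfl)]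
        omega
      · rw [if_neg hr]
        split_ifs with hv
        · have hr' : ¬ ∃ v ∈ (σ ⟨i, h⟩).1, deg (run R σ i) v < k := by
            have h1 : ¬ i < M₁ := by omega
            have h2 : ¬ i < M₂ := by omega
            simpa only [hR, theRule, h1, h2, if_false] using hr
          by_contra hc
          exact hr' ⟨v, hv, by omega⟩
        · simpa using ih
    · rw [cnt_succ_of_le σ v M₂ i h, run_succ_of_le R σ i h]
      exact ih

/-- Deterministic correctness of the strategy. -/
lemma final_deg {n k M₁ M₂ : ℕ} (hk : 1 ≤ k) (hM : M₁ ≤ M₂) (σ : Ord n) (m t : ℕ)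
    (hmt : m ≤ t) (hMm : M₂ ≤ m) (hG : ∀ v, k ≤ deg (procEdges σ t) v)
    (hlate : ∀ v, k ≤ cnt σ v M₂ m + 1) (v : Fin n) :
    k ≤ deg (run (theRule n k M₁ M₂) σ t) v := by
  have h1 := late_deg (k := k) hM σ t (hMm.trans hmt) v
  have h2 : cnt σ v M₂ m ≤ cnt σ v M₂ t := by
    apply card_le_card
    intro j
    simp only [mem_filter, mem_univ, true_and]
    rintro ⟨a, b, c⟩
    exact ⟨a, by omega, c⟩
  have h3 := hG v
  have h4 := hlate v
  rw [deg_procEdges] at h3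
  by_cases hex : ∃ j : Fin (numEdges n), (j : ℕ) < M₂ ∧ v ∈ (σ j).1
  · obtain ⟨j, hj, hv⟩ := hex
    have := revealed_pos (M₁ := M₁) (M₂ := M₂) hk σ M₂ j hj v hv
    omega
  · have h5 : cnt σ v 0 t ≤ cnt σ v M₂ t := by
      apply card_le_card
      intro j
      simp only [mem_filter, mem_univ, true_and]
      rintro ⟨a, b, c⟩
      refine ⟨?_, b, c⟩
      by_contra hj
      exact hex ⟨j, by omega, c⟩
    omega

end RGP


namespace RGP

/-! ### Degree functionals -/

lemma sum_upd {n : ℕ} (g : ℕ → ℝ) (d : Fin n → ℕ) (u v : Fin n) (huv : u ≠ v) :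
    ∑ w, g (d w + if w ∈ s(u, v) then 1 else 0) =
      ∑ w, g (d w) + ((g (d u + 1) - g (d u)) + (g (d v + 1) - g (d v))) := by
  rw [← sub_eq_iff_eq_add', ← sum_sub_distrib]
  have h1 : ∀ w : Fin n, g (d w + if w ∈ s(u, v) then 1 else 0) - g (d w) =
      if w ∈ s(u, v) then g (d w + 1) - g (d w) else 0 := by
    intro w
    split_ifs <;> simp
  simp_rw [h1]
  rw [← sum_filter]
  have h2 : univ.filter (fun w => w ∈ s(u, v)) = {u, v} := by
    ext w; simp
  rw [h2, sum_pair huv]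

/-- Total excess over `k`. -/
noncomputable def exc {n : ℕ} (k : ℕ) (d : Fin n → ℕ) : ℝ := ∑ v, ((d v - k : ℕ) : ℝ)

/-- Total deficiency below `t`. -/
noncomputable def dfc {n : ℕ} (t : ℕ) (d : Fin n → ℕ) : ℝ := ∑ v, ((t - d v : ℕ) : ℝ)

/-- Exponentially weighted degree sum. -/
noncomputable def wsum {n : ℕ} (k : ℕ) (d : Fin n → ℕ) : ℝ := ∑ v, (2 : ℝ) ^ (min (d v) k)

lemma exc_nonneg {n : ℕ} (k : ℕ) (d : Fin n → ℕ) : 0 ≤ exc k d :=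
  sum_nonneg (fun _ _ => by positivity)

lemma dfc_nonneg {n : ℕ} (k : ℕ) (d : Fin n → ℕ) : 0 ≤ dfc k d :=
  sum_nonneg (fun _ _ => by positivity)

lemma dfc_le {n : ℕ} (t : ℕ) (d : Fin n → ℕ) : dfc t d ≤ t * n := by
  unfold dfc
  calc _ ≤ ∑ _v : Fin n, (t : ℝ) := by
        apply sum_le_sum
        intro v _
        exact_mod_cast Nat.sub_le _ _
    _ = _ := by simp [mul_comm]

/-- Number of vertices of degree below `t`. -/
def dset {n : ℕ} (t : ℕ) (d : Fin n → ℕ) : Finset (Fin n) := univ.filter (fun v => d v < t)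

lemma dfc_le_dset {n : ℕ} (t : ℕ) (d : Fin n → ℕ) : dfc t d ≤ t * (dset t d).card := by
  unfold dfc dset
  rw [← sum_filter_add_sum_filter_not univ (fun v => d v < t)]
  have h2 : ∑ v ∈ univ.filter (fun v => ¬ d v < t), ((t - d v : ℕ) : ℝ) = 0 := by
    apply sum_eq_zero
    intro v hv
    rw [mem_filter] at hv
    have : t - d v = 0 := by omega
    simp [this]
  rw [h2, add_zero]
  calc _ ≤ ∑ _v ∈ univ.filter (fun v => d v < t), (t : ℝ) := by
        apply sum_le_sum
        intro v _
        exact_mod_cast Nat.sub_le _ _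
    _ = _ := by rw [sum_const, nsmul_eq_mul, mul_comm]

/-- Updated degrees. -/
def upd {n : ℕ} (d : Fin n → ℕ) (e : Sym2 (Fin n)) : Fin n → ℕ :=
  fun w => d w + if w ∈ e then 1 else 0

lemma deg_insert_eq_upd {n : ℕ} (B : Finset (Sym2 (Fin n))) (e : Sym2 (Fin n)) (he : e ∉ B) :
    deg (insert e B) = upd (deg B) e := funext (deg_insert B e he)

lemma exc_upd {n : ℕ} (k : ℕ) (d : Fin n → ℕ) (u v : Fin n) (huv : u ≠ v) :
    exc k (upd d s(u, v)) =
      exc k d + ((if k ≤ d u then 1 else 0) + (if k ≤ d v then 1 else 0)) := by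
  have key : ∀ x : ℕ, (((x + 1 - k : ℕ) : ℝ)) - ((x - k : ℕ) : ℝ) = if k ≤ x then 1 else 0 := by
    intro x
    split_ifs with h
    · rw [Nat.sub_add_comm h]; push_cast; ring
    · have h1 : x + 1 - k = 0 := by omega
      have h2 : x - k = 0 := by omega
      simp [h1, h2]
  unfold exc upd
  rw [sum_upd (fun x => ((x - k : ℕ) : ℝ)) d u v huv, key, key]

lemma dfc_upd {n : ℕ} (t : ℕ) (d : Fin n → ℕ) (u v : Fin n) (huv : u ≠ v) :
    dfc t (upd d s(u, v)) =
      dfc t d - ((if d u < t then 1 else 0) + (if d v < t then 1 else 0)) := by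
  have key : ∀ x : ℕ, (((t - (x + 1) : ℕ) : ℝ)) - ((t - x : ℕ) : ℝ) =
      - if x < t then 1 else 0 := by
    intro x
    split_ifs with h
    · have : t - x = t - (x + 1) + 1 := by omega
      rw [this]; push_cast; ring
    · have h1 : t - (x + 1) = 0 := by omega
      have h2 : t - x = 0 := by omega
      simp [h1, h2]
  unfold dfc upd
  rw [sum_upd (fun x => ((t - x : ℕ) : ℝ)) d u v huv, key, key]
  ring

lemma wsum_upd {n : ℕ} (k : ℕ) (d : Fin n → ℕ) (u v : Fin n) (huv : u ≠ v) :
    wsum k (upd d s(u, v)) =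
      wsum k d + ((if d u < k then 2 ^ (d u) else 0) + (if d v < k then 2 ^ (d v) else 0)) := by
  have key : ∀ x : ℕ, (2 : ℝ) ^ (min (x + 1) k) - 2 ^ (min x k) =
      if x < k then 2 ^ x else 0 := by
    intro x
    split_ifs with h
    · rw [min_eq_left (by omega), min_eq_left h.le, pow_succ]; ring
    · rw [min_eq_right (by omega), min_eq_right (by omega)]; ring
  unfold wsum upd
  rw [sum_upd (fun x => (2 : ℝ) ^ (min x k)) d u v huv, key, key]

/-! ### Cost accounting -/

lemma card_run_le {n : ℕ} (R : Rule n) (σ : Ord n) (i k : ℕ) :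
    2 * ((run R σ i).card : ℝ) ≤ k * n + exc k (deg (run R σ i)) := by
  have h := sum_deg (run R σ i) (run_not_diag R σ i)
  have h' : (2 * ((run R σ i).card : ℝ)) = ∑ v, ((deg (run R σ i) v : ℕ) : ℝ) := by
    exact_mod_cast h.symm
  rw [h']
  unfold exc
  have : (k * n : ℝ) = ∑ _v : Fin n, (k : ℝ) := by simp [mul_comm]
  rw [this, ← sum_add_distrib]
  apply sum_le_sum
  intro v _
  norm_cast
  omega

lemma phase2_step {n k M₁ M₂ : ℕ} (hk : 1 ≤ k) (σ : Ord n) (i : ℕ)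
    (h1 : M₁ ≤ i) (h2 : i < M₂) :
    exc k (deg (run (theRule n k M₁ M₂) σ (i + 1))) +
      dfc 1 (deg (run (theRule n k M₁ M₂) σ (i + 1))) ≤
    exc k (deg (run (theRule n k M₁ M₂) σ i)) + dfc 1 (deg (run (theRule n k M₁ M₂) σ i)) := by
  set R := theRule n k M₁ M₂ with hR
  by_cases h : i < numEdges n
  swap
  · rw [run_succ_of_le R σ i h]
  have hnm := not_mem_run R σ i ⟨i, h⟩ le_rfl
  have hnd := (σ ⟨i, h⟩).2
  rw [run_succ R σ i h]
  generalize (σ ⟨i, h⟩).1 = e at hnm hnd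
  unfold stepB
  split_ifs with hr
  · rw [deg_insert_eq_upd _ _ hnm]
    have hr' : (∃ v ∈ e, deg (run R σ i) v = 0) ∨ ∀ v ∈ e, deg (run R σ i) v < k := by
      have h1 : ¬ i < M₁ := by omega
      simpa only [hR, theRule, h1, h2, if_false, if_true] using hr
    generalize deg (run R σ i) = d at *
    induction e using Sym2.ind with
    | _ u v =>
      have huv : u ≠ v := by simpa using hnd
      rw [exc_upd k d u v huv, dfc_upd 1 d u v huv]
      simp only [Sym2.mem_iff, exists_eq_or_imp, exists_eq_left, forall_eq_or_imp,
        forall_eq] at hr'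
      have hA : ∀ x : ℕ, x < k → ¬ k ≤ x := fun x hx => by omega
      rcases hr' with (h0 | h0) | ⟨ha, hb⟩
      · rw [if_neg (hA (d u) (by omega)), if_pos (show d u < 1 by omega)]
        split_ifs <;> linarith
      · rw [if_neg (hA (d v) (by omega)), if_pos (show d v < 1 by omega)]
        split_ifs <;> linarith
      · rw [if_neg (hA (d u) ha), if_neg (hA (d v) hb)]
        split_ifs <;> linarith
  · exact le_rfl

lemma phase3_step {n k M₁ M₂ : ℕ} (hM : M₁ ≤ M₂) (σ : Ord n) (i : ℕ)
    (h1 : M₂ ≤ i) :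
    exc k (deg (run (theRule n k M₁ M₂) σ (i + 1))) +
      dfc k (deg (run (theRule n k M₁ M₂) σ (i + 1))) ≤
    exc k (deg (run (theRule n k M₁ M₂) σ i)) + dfc k (deg (run (theRule n k M₁ M₂) σ i)) := by
  set R := theRule n k M₁ M₂ with hR
  by_cases h : i < numEdges n
  swap
  · rw [run_succ_of_le R σ i h]
  have hnm := not_mem_run R σ i ⟨i, h⟩ le_rfl
  have hnd := (σ ⟨i, h⟩).2
  rw [run_succ R σ i h]
  generalize (σ ⟨i, h⟩).1 = e at hnm hnd
  unfold stepB
  split_ifs with hr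
  · rw [deg_insert_eq_upd _ _ hnm]
    have hr' : (∃ v ∈ e, deg (run R σ i) v < k) := by
      have h1 : ¬ i < M₁ := by omega
      have h2 : ¬ i < M₂ := by omega
      simpa only [hR, theRule, h1, h2, if_false, if_true] using hr
    generalize deg (run R σ i) = d at *
    induction e using Sym2.ind with
    | _ u v =>
      have huv : u ≠ v := by simpa using hnd
      rw [exc_upd k d u v huv, dfc_upd k d u v huv]
      simp only [Sym2.mem_iff, exists_eq_or_imp, exists_eq_left] at hr'
      have hA : ∀ x : ℕ, x < k → ¬ k ≤ x := fun x hx => by omega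
      rcases hr' with h0 | h0
      · rw [if_neg (hA (d u) h0), if_pos h0]
        split_ifs <;> linarith
      · rw [if_neg (hA (d v) h0), if_pos h0]
        split_ifs <;> linarith
  · exact le_rfl

lemma dfc_one_le {n k M₁ M₂ : ℕ} (hk : 1 ≤ k) (hM : M₁ ≤ M₂) (σ : Ord n) (i : ℕ)
    (hi : M₂ ≤ i) :
    2 * ((run (theRule n k M₁ M₂) σ i).card : ℝ) ≤ k * n +
      exc k (deg (run (theRule n k M₁ M₂) σ M₁)) +
      dfc 1 (deg (run (theRule n k M₁ M₂) σ M₁)) +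
      dfc k (deg (run (theRule n k M₁ M₂) σ M₂)) := by
  set R := theRule n k M₁ M₂ with hR
  have hc := card_run_le R σ i k
  have hA : ∀ j, M₁ ≤ j → j ≤ M₂ → exc k (deg (run R σ j)) + dfc 1 (deg (run R σ j)) ≤
      exc k (deg (run R σ M₁)) + dfc 1 (deg (run R σ M₁)) := by
    intro j hj
    induction j, hj using Nat.le_induction with
    | base => intro _; exact le_rfl
    | succ j hj ih =>
      intro hj2
      exact (phase2_step hk σ j hj (by omega)).trans (ih (by omega))
  have hB : exc k (deg (run R σ i)) + dfc k (deg (run R σ i)) ≤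
      exc k (deg (run R σ M₂)) + dfc k (deg (run R σ M₂)) := by
    induction i, hi using Nat.le_induction with
    | base => exact le_rfl
    | succ j hj ih => exact (phase3_step hM σ j hj).trans (ih (card_run_le R σ j k))
  have h1 := hA M₂ hM le_rfl
  have h2 := dfc_nonneg 1 (deg (run R σ M₂))
  have h3 := dfc_nonneg k (deg (run R σ i))
  linarith

end RGP


namespace RGP

/-! ### Few deficient vertices -/

lemma card_edges_in {n : ℕ} (D : Finset (Fin n)) :
    (univ.filter (fun e : EdgeType n => ∀ v ∈ e.1, v ∈ D)).card = D.card.choose 2 := by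
  rw [← Sym2.card_image_offDiag]
  rw [← card_map (Function.Embedding.subtype _)]
  congr 1
  ext e
  simp only [Finset.mem_map, mem_filter, mem_univ, true_and, Function.Embedding.coe_subtype,
    Subtype.exists, exists_and_right, exists_eq_right, mem_image, mem_offDiag, Prod.exists]
  induction e using Sym2.ind with
  | _ u v =>
    constructor
    · rintro ⟨h1, h2⟩
      refine ⟨u, v, ⟨h2 u (by simp), h2 v (by simp), by simpa using h1⟩, rfl⟩
    · rintro ⟨a, b, ⟨ha, hb, hab⟩, h⟩
      rw [← h]
      refine ⟨by simpa using hab, ?_⟩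
      intro w hw
      rcases Sym2.mem_iff.1 hw with rfl | rfl
      · exact ha
      · exact hb

lemma card_unrevealed_in {n : ℕ} (σ : Ord n) (D : Finset (Fin n)) (i : Fin (numEdges n)) :
    D.card.choose 2 ≤
      ((univ.filter (fun j : Fin (numEdges n) => i ≤ j)).filter
        (fun j => ∀ v ∈ (σ j).1, v ∈ D)).card + i := by
  have h1 : D.card.choose 2 =
      (univ.filter (fun j : Fin (numEdges n) => ∀ v ∈ (σ j).1, v ∈ D)).card := by
    rw [← card_edges_in D, ← card_map σ.toEmbedding]
    congr 1
    ext e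
    simp only [mem_filter, mem_univ, true_and, Finset.mem_map, Equiv.coe_toEmbedding]
    constructor
    · intro h
      exact ⟨σ.symm e, by simpa using h, by simp⟩
    · rintro ⟨j, hj, rfl⟩
      exact hj
  have h2 : (univ.filter (fun j : Fin (numEdges n) => ∀ v ∈ (σ j).1, v ∈ D)) ⊆
      ((univ.filter (fun j : Fin (numEdges n) => i ≤ j)).filter
        (fun j => ∀ v ∈ (σ j).1, v ∈ D)) ∪ Finset.Iio i := by
    intro j hj
    simp only [mem_union, mem_filter, mem_univ, true_and, mem_Iio] at hj ⊢
    rcases le_or_gt i j with h | h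
    · exact Or.inl ⟨h, hj⟩
    · exact Or.inr h
  calc _ = _ := h1
    _ ≤ _ := card_le_card h2
    _ ≤ _ := card_union_le _ _
    _ = _ := by rw [Fin.card_Iio]

lemma dset_anti {n : ℕ} (t : ℕ) {d d' : Fin n → ℕ} (h : ∀ v, d v ≤ d' v) :
    dset t d' ⊆ dset t d := by
  intro v hv
  simp only [dset, mem_filter, mem_univ, true_and] at hv ⊢
  exact lt_of_le_of_lt (h v) hv

lemma Pr_eq_Ex' {n : ℕ} (p : Ord n → Prop) [DecidablePred p] :
    Pr p = Ex (fun σ => if p σ then (1 : ℝ) else 0) := by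
  rw [Pr_eq_Ex]
  congr 1
  funext σ
  congr

lemma deficient_step {n : ℕ} (R : Rule n) (t : ℕ) (i q T : ℕ) (hi : i < numEdges n) (η : ℝ)
    (hiT : i ≤ T) (hη : η * numEdges n ≤ (q.choose 2 : ℝ) - T) (hη0 : 0 ≤ η)
    (hR : ∀ B e, (∀ v ∈ e, deg B v < t) → R i B e) :
    Ex (fun σ : Ord n => dfc t (deg (run R σ (i + 1)))) ≤
      Ex (fun σ : Ord n => dfc t (deg (run R σ i)) -
        η * if q ≤ (dset t (deg (run R σ i))).card then 1 else 0) := by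
  refine drift R i hi (fun B => dfc t (deg B))
    (fun B => dfc t (deg B) - η * if q ≤ (dset t (deg B)).card then 1 else 0) ?_
  intro σ
  set B := run R σ i with hB
  set J := univ.filter (fun j : Fin (numEdges n) => ⟨i, hi⟩ ≤ j) with hJ
  have hJc : (J.card : ℝ) = (numEdges n : ℝ) - i := by
    have : J = Finset.Ici ⟨i, hi⟩ := by ext; simp [hJ]
    rw [this, Fin.card_Ici, Nat.cast_sub hi.le]
  have hstep : ∀ j ∈ J, dfc t (deg (stepB R i B (σ j).1)) ≤
      dfc t (deg B) - if (∀ v ∈ (σ j).1, v ∈ dset t (deg B)) then 1 else 0 := by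
    intro j hj
    have hij : i ≤ (j : ℕ) := by
      have := (mem_filter.1 hj).2
      exact this
    have hnm := not_mem_run R σ i j hij
    have hnd := (σ j).2
    rw [← hB] at hnm
    generalize (σ j).1 = e at hnm hnd ⊢
    unfold stepB
    by_cases hr : R i B e
    · rw [if_pos hr, deg_insert_eq_upd _ _ hnm]
      induction e using Sym2.ind with
      | _ u v =>
        have huv : u ≠ v := by simpa using hnd
        rw [dfc_upd t _ u v huv]
        simp only [Sym2.mem_iff, forall_eq_or_imp, forall_eq, dset, mem_filter, mem_univ, true_and]
        by_cases h1 : deg B u < t <;> by_cases h2 : deg B v < t <;> simp [h1, h2]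
    · rw [if_neg hr, if_neg]
      · simp
      · intro h
        apply hr
        apply hR
        intro v hv
        have := h v hv
        simpa [dset] using this
  have hsum := sum_le_sum hstep
  rw [sum_sub_distrib, sum_const, nsmul_eq_mul, hJc, ← Finset.sum_filter, sum_const,
    nsmul_eq_mul, mul_one] at hsum
  refine hsum.trans ?_
  rw [mul_sub]
  apply sub_le_sub_left
  by_cases hq : q ≤ (dset t (deg B)).card
  · rw [if_pos hq, mul_one]
    have h1 := card_unrevealed_in σ (dset t (deg B)) ⟨i, hi⟩
    have h2 : q.choose 2 ≤ (dset t (deg B)).card.choose 2 := Nat.choose_le_choose 2 hq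
    have h3 : (q.choose 2 : ℝ) ≤
      (((univ.filter (fun j : Fin (numEdges n) => ⟨i, hi⟩ ≤ j)).filter
        (fun j => ∀ v ∈ (σ j).1, v ∈ dset t (deg B))).card : ℝ) + i := by
      exact_mod_cast h2.trans h1
    have h4 : (i : ℝ) ≤ T := by exact_mod_cast hiT
    have h5 : ((numEdges n : ℝ) - i) * η ≤ η * numEdges n := by
      have : 0 ≤ (i : ℝ) * η := by positivity
      linarith
    linarith
  · rw [if_neg hq]
    simp

/-- Few deficient vertices remain at the end of a phase. -/
lemma few_deficient {n : ℕ} (R : Rule n) (t s M q : ℕ) (hsM : s + M ≤ numEdges n) (η : ℝ)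
    (hη : η * numEdges n ≤ (q.choose 2 : ℝ) - ((s + M : ℕ) : ℝ)) (hη0 : 0 ≤ η)
    (hR : ∀ i B e, s ≤ i → i < s + M → (∀ v ∈ e, deg B v < t) → R i B e) :
    (M : ℝ) * η * Pr (fun σ : Ord n => q ≤ (dset t (deg (run R σ (s + M)))).card) ≤ t * n := by
  classical
  set P := Pr (fun σ : Ord n => q ≤ (dset t (deg (run R σ (s + M)))).card) with hP
  have key : ∀ l, l ≤ M →
      Ex (fun σ : Ord n => dfc t (deg (run R σ (s + l)))) ≤ t * n - l * η * P := by
    intro l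
    induction l with
    | zero =>
      intro _
      simp only [add_zero, Nat.cast_zero, zero_mul, sub_zero]
      exact (Ex_mono (fun σ => dfc_le t _)).trans (Ex_const _).le
    | succ l ih =>
      intro hl
      have h1 := deficient_step R t (s + l) q (s + M) (by omega) η (by omega) hη hη0
        (fun B e => hR (s + l) B e (by omega) (by omega))
      have h2 := ih (by omega)
      rw [Ex_sub, Ex_mul_left, ← Pr_eq_Ex'] at h1
      have h3 : P ≤ Pr (fun σ : Ord n => q ≤ (dset t (deg (run R σ (s + l)))).card) := by
        apply Pr_mono
        intro σ hσ
        exact hσ.trans (card_le_card (dset_anti t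
          (fun v => deg_mono (run_mono R σ (by omega)) v)))
      have h4 := mul_le_mul_of_nonneg_left h3 hη0
      have h5 : s + (l + 1) = s + l + 1 := by ring
      rw [h5]
      push_cast
      linarith
  have h1 := key M le_rfl
  have h2 : 0 ≤ Ex (fun σ : Ord n => dfc t (deg (run R σ (s + M)))) := by
    rw [← Ex_const (n := n) 0]
    exact Ex_mono (fun σ => dfc_nonneg t _)
  linarith

/-! ### The potential function for the first phase -/

/-- The potential. -/
noncomputable def pot {n : ℕ} (k : ℕ) (d : Fin n → ℕ) : ℝ :=
  (2 : ℝ) ^ k / 2 * n * exc k d + dfc 1 d * wsum k d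

/-- Change of the potential for an edge `uv`. -/
noncomputable def dpot {n : ℕ} (k : ℕ) (d : Fin n → ℕ) (u v : Fin n) : ℝ :=
  if d u = 0 ∨ d v = 0 then pot k (upd d s(u, v)) - pot k d else 0

lemma dpot_formula {n : ℕ} (k : ℕ) (hk : 1 ≤ k) (d : Fin n → ℕ) (u v : Fin n) (huv : u ≠ v)
    (a x f : Fin n → ℝ) (ha : a = fun w => if d w < 1 then 1 else 0)
    (hx : x = fun w => if d w < k then 2 ^ (d w) else 0)
    (hf : f = fun w => if k ≤ d w then 1 else 0) :
    dpot k d u v = (2 : ℝ) ^ k / 2 * n * (a u * f v + a v * f u)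
      + dfc 1 d * (a u * x v + a v * x u + a u + a v - 2 * a u * a v)
      - wsum k d * (a u + a v) - a u - a v - a u * x v - a v * x u := by
  unfold dpot pot
  rw [exc_upd k d u v huv, dfc_upd 1 d u v huv, wsum_upd k d u v huv]
  subst ha hx hf
  have hk0 : ¬ k ≤ 0 := by omega
  have hk1 : 0 < k := hk
  by_cases h1 : d u = 0 <;> by_cases h2 : d v = 0
  · simp only [h1, h2, hk0, hk1, if_true, if_false, pow_zero, true_or, Nat.lt_one_iff]
    ring
  · simp only [h1, h2, hk0, hk1, if_true, if_false, pow_zero, true_or, Nat.lt_one_iff]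
    ring
  · simp only [h1, h2, hk0, hk1, if_true, if_false, pow_zero, or_true, Nat.lt_one_iff]
    ring
  · simp only [h1, h2, if_false, Nat.lt_one_iff, or_self]
    ring

lemma sum_dpot {n : ℕ} (hn : 2 ≤ n) (k : ℕ) (hk : 1 ≤ k) (d : Fin n → ℕ) :
    ∑ p ∈ (univ : Finset (Fin n)).offDiag, dpot k d p.1 p.2 ≤ 0 := by
  set a : Fin n → ℝ := fun w => if d w < 1 then 1 else 0 with ha
  set x : Fin n → ℝ := fun w => if d w < k then 2 ^ (d w) else 0 with hx
  set f : Fin n → ℝ := fun w => if k ≤ d w then 1 else 0 with hf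
  set I := dfc 1 d with hI
  set S := wsum k d with hS
  set c := (2 : ℝ) ^ k / 2 with hc
  have hIa : ∑ w, a w = I := by
    rw [hI]; unfold dfc
    apply sum_congr rfl
    intro w _
    rw [ha]
    by_cases h : d w < 1
    · have : d w = 0 := by omega
      simp [this]
    · have : 1 - d w = 0 := by omega
      simp only [h, if_false, this]; simp
  set X := ∑ w, x w with hX
  set F := ∑ w, f w with hF
  have hSX : S = X + 2 * c * F := by
    rw [hS, hX, hF, mul_sum, ← sum_add_distrib]
    unfold wsum
    apply sum_congr rfl
    intro w _
    rw [hx, hf, hc]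
    by_cases h : d w < k
    · have h' : ¬ k ≤ d w := by omega
      simp only [h, h', if_true, if_false, min_eq_left h.le]; ring
    · have h' : k ≤ d w := by omega
      simp only [h, h', if_true, if_false, min_eq_right h']; ring
  have hax : ∀ w, a w * x w = a w := by
    intro w
    rw [ha, hx]
    by_cases h : d w < 1
    · have h0 : d w = 0 := by omega
      have h1 : 0 < k := hk
      simp [h0, h1]
    · simp only [h, if_false, zero_mul]
  have haf : ∀ w, a w * f w = 0 := by
    intro w
    rw [ha, hf]
    by_cases h : d w < 1
    · have h0 : ¬ k ≤ d w := by omega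
      simp only [h0, if_false, mul_zero]
    · simp only [h, if_false, zero_mul]
  have haa : ∀ w, a w * a w = a w := by
    intro w
    rw [ha]
    by_cases h : d w < 1 <;> simp [h]
  have hxa : ∀ w, a w ≤ x w := by
    intro w
    rw [ha, hx]
    by_cases h : d w < 1
    · have h0 : d w = 0 := by omega
      have h1 : 0 < k := hk
      simp [h0, h1]
    · simp only [h, if_false]; positivity
  have hXI : I ≤ X := by rw [← hIa]; exact sum_le_sum (fun w _ => hxa w)
  have hIn : I ≤ n := by have := dfc_le 1 d; simpa using this
  have hI0 : 0 ≤ I := dfc_nonneg 1 d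
  have hF0 : 0 ≤ F := by
    apply sum_nonneg; intro w _; rw [hf]; positivity
  have hc0 : 0 < c := by positivity
  have hn' : (2 : ℝ) ≤ n := by exact_mod_cast hn
  set G : Fin n → Fin n → ℝ := fun u v => c * n * (a u * f v + a v * f u)
      + I * (a u * x v + a v * x u + a u + a v - 2 * a u * a v)
      - S * (a u + a v) - a u - a v - a u * x v - a v * x u with hG
  have e1 : ∑ p ∈ (univ : Finset (Fin n)).offDiag, dpot k d p.1 p.2 =
      ∑ p ∈ (univ : Finset (Fin n)).offDiag, G p.1 p.2 := by
    apply sum_congr rfl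
    intro p hp
    exact dpot_formula k hk d p.1 p.2 (mem_offDiag.1 hp).2.2 a x f ha hx hf
  have e2 : ∑ p ∈ (univ : Finset (Fin n)).offDiag, G p.1 p.2 + ∑ u, G u u
      = ∑ u, ∑ v, G u v := by
    have h1 : ∑ p ∈ (univ : Finset (Fin n)).diag, G p.1 p.2 = ∑ u, G u u := by
      rw [sum_diag]
    rw [← h1, ← sum_product', ← diag_union_offDiag, sum_union (disjoint_diag_offDiag _)]
    ring
  have e3 : ∑ u, G u u = -(2 * S * I) + 2 * I * I - 4 * I := by
    have : ∀ u, G u u = (2 * I - 2 * S - 4) * a u := by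
      intro u
      have h1 := hax u
      have h2 := haf u
      have h3 := haa u
      simp only [hG]
      have : c * n * (a u * f u + a u * f u)
      + I * (a u * x u + a u * x u + a u + a u - 2 * a u * a u)
      - S * (a u + a u) - a u - a u - a u * x u - a u * x u = c * n * (a u * f u + a u * f u)
      + I * (a u * x u + a u * x u + a u + a u - 2 * (a u * a u))
      - S * (a u + a u) - a u - a u - a u * x u - a u * x u := by ring
      rw [this, h1, h2, h3]; ring
    simp_rw [this]
    rw [← mul_sum, hIa]; ring
  have e4 : ∑ u, ∑ v, G u v = c * n * (2 * I * F) + I * (2 * I * X + 2 * n * I - 2 * I * I)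
      - S * (2 * n * I) - 2 * n * I - 2 * I * X := by
    have : ∀ u, ∑ v, G u v = c * n * (a u * F + I * f u)
      + I * (a u * X + I * x u + n * a u + I - 2 * a u * I)
      - S * (n * a u + I) - n * a u - I - a u * X - I * x u := by
      intro u
      simp only [hG, sum_add_distrib, sum_sub_distrib, ← mul_sum, ← sum_mul, hIa, sum_const,
        card_univ, Fintype.card_fin, nsmul_eq_mul]
      ring
    simp_rw [this]
    simp only [sum_add_distrib, sum_sub_distrib, ← mul_sum, ← sum_mul, hIa, sum_const,
        card_univ, Fintype.card_fin, nsmul_eq_mul]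
    rw [← hX, ← hF]
    ring
  have e5 : ∑ p ∈ (univ : Finset (Fin n)).offDiag, dpot k d p.1 p.2 =
      2 * I * (c * F * (2 - n) - (n - I) * (X - I) - I - (n - 2)) := by
    rw [e1]
    have : ∑ p ∈ (univ : Finset (Fin n)).offDiag, G p.1 p.2 = ∑ u, ∑ v, G u v - ∑ u, G u u := by
      linarith
    rw [this, e3, e4, hSX]
    ring
  rw [e5]
  apply mul_nonpos_of_nonneg_of_nonpos (by positivity)
  have h1 : c * F * (2 - n) ≤ 0 :=
    mul_nonpos_of_nonneg_of_nonpos (by positivity) (by linarith)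
  have h2 : 0 ≤ (n - I) * (X - I) := mul_nonneg (by linarith) (by linarith)
  linarith

end RGP


namespace RGP

/-! ### Excess after the first phase -/

/-- Change of the potential for an edge `e`. -/
noncomputable def dpotE {n : ℕ} (k : ℕ) (d : Fin n → ℕ) (e : Sym2 (Fin n)) : ℝ :=
  if ∃ v ∈ e, d v = 0 then pot k (upd d e) - pot k d else 0

lemma dpotE_mk {n : ℕ} (k : ℕ) (d : Fin n → ℕ) (u v : Fin n) :
    dpotE k d s(u, v) = dpot k d u v := by
  unfold dpotE dpot
  simp [Sym2.mem_iff]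

lemma two_mul_sum_edges {n : ℕ} (F : Sym2 (Fin n) → ℝ) :
    2 * ∑ e : EdgeType n, F e.1 = ∑ p ∈ (univ : Finset (Fin n)).offDiag, F s(p.1, p.2) := by
  have h1 : ∑ e : EdgeType n, F e.1 =
      ∑ p ∈ (univ : Finset (Fin n)).offDiag with p.1 < p.2, F s(p.1, p.2) := by
    rw [← Finset.sum_sym2_filter_not_isDiag (univ : Finset (Fin n)) F]
    rw [← Finset.sum_subtype]
    intro e
    simp
  have h2 : ∑ p ∈ (univ : Finset (Fin n)).offDiag with ¬ p.1 < p.2, F s(p.1, p.2) =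
      ∑ p ∈ (univ : Finset (Fin n)).offDiag with p.1 < p.2, F s(p.1, p.2) := by
    refine sum_bij' (fun p _ => p.swap) (fun p _ => p.swap) ?_ ?_ ?_ ?_ ?_
    · rintro ⟨a, b⟩ h
      simp only [mem_filter, mem_offDiag, mem_univ, true_and, Prod.swap] at h ⊢
      exact ⟨fun h' => h.1 h'.symm, lt_of_le_of_ne (not_lt.1 h.2) (fun h' => h.1 h'.symm)⟩
    · rintro ⟨a, b⟩ h
      simp only [mem_filter, mem_offDiag, mem_univ, true_and, Prod.swap] at h ⊢
      exact ⟨fun h' => h.1 h'.symm, not_lt.2 h.2.le⟩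
    · intros; simp
    · intros; simp
    · rintro ⟨a, b⟩ _
      simp only [Prod.swap]
      rw [Sym2.eq_swap]
  rw [← sum_filter_add_sum_filter_not _ (fun p : Fin n × Fin n => p.1 < p.2), h2, h1]
  ring

lemma sum_dpotE {n : ℕ} (hn : 2 ≤ n) (k : ℕ) (hk : 1 ≤ k) (d : Fin n → ℕ) :
    ∑ e : EdgeType n, dpotE k d e.1 ≤ 0 := by
  have h1 := two_mul_sum_edges (dpotE k d)
  simp_rw [dpotE_mk] at h1
  have h2 := sum_dpot hn k hk d
  linarith

lemma dpotE_abs {n : ℕ} (hn : 2 ≤ n) (k : ℕ) (d : Fin n → ℕ) (e : Sym2 (Fin n))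
    (he : ¬ e.IsDiag) : |dpotE k d e| ≤ 4 * 2 ^ k * n := by
  have hn' : (2 : ℝ) ≤ n := by exact_mod_cast hn
  have hpos : (0 : ℝ) < 2 ^ k := by positivity
  unfold dpotE
  split_ifs
  swap
  · simp
  induction e using Sym2.ind with
  | _ u v =>
    have huv : u ≠ v := by simpa using he
    unfold pot
    rw [exc_upd k d u v huv, dfc_upd 1 d u v huv, wsum_upd k d u v huv]
    have hx : ∀ w, (0 : ℝ) ≤ (if d w < k then 2 ^ (d w) else 0) ∧
        (if d w < k then (2 : ℝ) ^ (d w) else 0) ≤ 2 ^ k := by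
      intro w
      split_ifs with h
      · exact ⟨by positivity, pow_le_pow_right₀ (by norm_num) h.le⟩
      · exact ⟨le_rfl, hpos.le⟩
    have hf : ∀ w, (0 : ℝ) ≤ (if k ≤ d w then 1 else 0) ∧
        (if k ≤ d w then (1 : ℝ) else 0) ≤ 1 := by
      intro w; split_ifs <;> norm_num
    have ha : ∀ w, (0 : ℝ) ≤ (if d w < 1 then 1 else 0) ∧
        (if d w < 1 then (1 : ℝ) else 0) ≤ 1 := by
      intro w; split_ifs <;> norm_num
    have hI0 := dfc_nonneg 1 d
    have hI1 : dfc 1 d ≤ n := by simpa using dfc_le 1 d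
    have hS0 : 0 ≤ wsum k d := sum_nonneg (fun _ _ => by positivity)
    have hS1 : wsum k d ≤ 2 ^ k * n := by
      unfold wsum
      calc _ ≤ ∑ _v : Fin n, (2 : ℝ) ^ k := by
            apply sum_le_sum
            intro v _
            exact pow_le_pow_right₀ (by norm_num) (min_le_right _ _)
        _ = _ := by simp [mul_comm]
    obtain ⟨hxu0, hxu1⟩ := hx u
    obtain ⟨hxv0, hxv1⟩ := hx v
    obtain ⟨hfu0, hfu1⟩ := hf u
    obtain ⟨hfv0, hfv1⟩ := hf v
    obtain ⟨hau0, hau1⟩ := ha u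
    obtain ⟨hav0, hav1⟩ := ha v
    generalize (if d u < k then (2 : ℝ) ^ (d u) else 0) = xu at *
    generalize (if d v < k then (2 : ℝ) ^ (d v) else 0) = xv at *
    generalize (if k ≤ d u then (1 : ℝ) else 0) = fu at *
    generalize (if k ≤ d v then (1 : ℝ) else 0) = fv at *
    generalize (if d u < 1 then (1 : ℝ) else 0) = au at *
    generalize (if d v < 1 then (1 : ℝ) else 0) = av at *
    generalize dfc 1 d = I at *
    generalize wsum k d = S at *
    generalize exc k d = W at *
    generalize (2 : ℝ) ^ k = Q at *
    generalize (n : ℝ) = N at *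
    have e1 : Q / 2 * N * (W + (fu + fv)) + (I - (au + av)) * (S + (xu + xv)) -
        (Q / 2 * N * W + I * S) = Q / 2 * N * (fu + fv) + I * (xu + xv)
          - (au + av) * (S + (xu + xv)) := by ring
    rw [e1]
    have b1 : Q / 2 * N * (fu + fv) ≤ Q / 2 * N * 2 :=
      mul_le_mul_of_nonneg_left (by linarith) (by positivity)
    have b1' : 0 ≤ Q / 2 * N * (fu + fv) := by positivity
    have b2 : I * (xu + xv) ≤ N * (2 * Q) :=
      mul_le_mul hI1 (by linarith) (by positivity) (by linarith)
    have b2' : 0 ≤ I * (xu + xv) := by positivity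
    have b3 : (au + av) * (S + (xu + xv)) ≤ 2 * (Q * N + 2 * Q) :=
      mul_le_mul (by linarith) (by linarith) (by positivity) (by linarith)
    have b3' : 0 ≤ (au + av) * (S + (xu + xv)) := by positivity
    have b4 : 0 ≤ Q * (N - 2) := mul_nonneg hpos.le (by linarith)
    have b5 : 0 ≤ Q * N := by positivity
    rw [abs_le]
    constructor <;> nlinarith

/-- Truncated square. -/
noncomputable def tsq (n : ℕ) (x : ℝ) : ℝ := (max (x - (n : ℝ) ^ 2) 0) ^ 2

lemma tsq_add (n : ℕ) (x y : ℝ) :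
    tsq n (x + y) ≤ tsq n x + 2 * max (x - (n : ℝ) ^ 2) 0 * y + y ^ 2 := by
  unfold tsq
  set z := x - (n : ℝ) ^ 2 with hz
  have : x + y - (n : ℝ) ^ 2 = z + y := by rw [hz]; ring
  rw [this]
  rcases le_total 0 z with h | h
  · rw [max_eq_left h]
    rcases le_total 0 (z + y) with h' | h'
    · rw [max_eq_left h']; nlinarith
    · rw [max_eq_right h']; nlinarith [sq_nonneg (z + y)]
  · rw [max_eq_right h]
    rcases le_total 0 (z + y) with h' | h'
    · rw [max_eq_left h']; nlinarith
    · rw [max_eq_right h']; nlinarith [sq_nonneg y]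

lemma pot_step {n k M₁ M₂ : ℕ} (hn : 2 ≤ n) (hk : 1 ≤ k) (i : ℕ) (hi : i < numEdges n)
    (hiM : i < M₁) :
    Ex (fun σ : Ord n => tsq n (pot k (deg (run (theRule n k M₁ M₂) σ (i + 1))))) ≤
      Ex (fun σ : Ord n => tsq n (pot k (deg (run (theRule n k M₁ M₂) σ i))) +
        (4 * 2 ^ k * n) ^ 2) := by
  set R := theRule n k M₁ M₂ with hR
  refine drift R i hi (fun B => tsq n (pot k (deg B)))
    (fun B => tsq n (pot k (deg B)) + (4 * 2 ^ k * n) ^ 2) ?_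
  intro σ
  set B := run R σ i with hB
  set J := univ.filter (fun j : Fin (numEdges n) => ⟨i, hi⟩ ≤ j) with hJ
  have hJc : (J.card : ℝ) = (numEdges n : ℝ) - i := by
    have : J = Finset.Ici ⟨i, hi⟩ := by ext; simp [hJ]
    rw [this, Fin.card_Ici, Nat.cast_sub hi.le]
  have hstep : ∀ j ∈ J, tsq n (pot k (deg (stepB R i B (σ j).1))) ≤
      tsq n (pot k (deg B)) + 2 * max (pot k (deg B) - (n : ℝ) ^ 2) 0 *
        dpotE k (deg B) (σ j).1 + (4 * 2 ^ k * n) ^ 2 := by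
    intro j hj
    have hij : i ≤ (j : ℕ) := (mem_filter.1 hj).2
    have hnm := not_mem_run R σ i j hij
    have hnd := (σ j).2
    rw [← hB] at hnm
    have e1 : pot k (deg (stepB R i B (σ j).1)) = pot k (deg B) + dpotE k (deg B) (σ j).1 := by
      unfold stepB dpotE
      have hr : R i B (σ j).1 ↔ ∃ v ∈ (σ j).1, deg B v = 0 := by
        simp only [hR, theRule, hiM, if_true]
      by_cases h : ∃ v ∈ (σ j).1, deg B v = 0
      · rw [if_pos (hr.2 h), if_pos h, deg_insert_eq_upd _ _ hnm]; ring
      · rw [if_neg (fun h' => h (hr.1 h')), if_neg h]; ring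
    rw [e1]
    have h1 := tsq_add n (pot k (deg B)) (dpotE k (deg B) (σ j).1)
    have h2 := dpotE_abs hn k (deg B) (σ j).1 hnd
    have h3 : (dpotE k (deg B) (σ j).1) ^ 2 ≤ (4 * 2 ^ k * n) ^ 2 := by
      rw [← sq_abs]
      exact pow_le_pow_left₀ (abs_nonneg _) h2 2
    linarith
  have hsum := sum_le_sum hstep
  rw [sum_add_distrib, sum_add_distrib, ← mul_sum, sum_const, sum_const, nsmul_eq_mul,
    nsmul_eq_mul, hJc] at hsum
  have hall : ∑ j ∈ J, dpotE k (deg B) (σ j).1 ≤ 0 := by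
    have e2 : ∑ j ∈ J, dpotE k (deg B) (σ j).1 = ∑ j, dpotE k (deg B) (σ j).1 := by
      apply sum_subset (subset_univ _)
      intro j _ hj
      have hji : (j : ℕ) < i := by
        by_contra hcon
        apply hj
        rw [hJ, mem_filter]
        refine ⟨mem_univ _, ?_⟩
        show i ≤ (j : ℕ)
        omega
      unfold dpotE
      rw [if_neg]
      rintro ⟨v, hv, h0⟩
      have := revealed_pos (M₁ := M₁) (M₂ := M₂) hk σ i j hji v hv
      rw [← hR, ← hB] at this
      omega
    rw [e2]
    have e3 : ∑ j, dpotE k (deg B) (σ j).1 = ∑ e : EdgeType n, dpotE k (deg B) e.1 :=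
      Equiv.sum_comp σ (fun e : EdgeType n => dpotE k (deg B) e.1)
    rw [e3]
    exact sum_dpotE hn k hk _
  have hm : 2 * max (pot k (deg B) - (n : ℝ) ^ 2) 0 * ∑ j ∈ J, dpotE k (deg B) (σ j).1 ≤ 0 :=
    mul_nonpos_of_nonneg_of_nonpos (by positivity) hall
  linarith

lemma pot_bound {n k M₁ M₂ : ℕ} (hn : 2 ≤ n) (hk : 1 ≤ k) (hM : M₁ ≤ numEdges n) :
    Ex (fun σ : Ord n => tsq n (pot k (deg (run (theRule n k M₁ M₂) σ M₁)))) ≤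
      M₁ * (4 * 2 ^ k * n) ^ 2 := by
  have key : ∀ i, i ≤ M₁ →
      Ex (fun σ : Ord n => tsq n (pot k (deg (run (theRule n k M₁ M₂) σ i)))) ≤
      i * (4 * 2 ^ k * n) ^ 2 := by
    intro i
    induction i with
    | zero =>
      intro _
      have : ∀ σ : Ord n, tsq n (pot k (deg (run (theRule n k M₁ M₂) σ 0))) = 0 := by
        intro σ
        have h0 : deg (run (theRule n k M₁ M₂) σ 0) = fun _ => 0 := by
          funext v; simp [run, deg]
        rw [h0]
        have : pot k (fun _ : Fin n => 0) = (n : ℝ) ^ 2 := by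
          unfold pot exc dfc wsum
          simp; ring
        rw [this]; simp [tsq]
      simp_rw [this]
      rw [Ex_const]; simp
    | succ i ih =>
      intro hi
      have h1 := pot_step (M₁ := M₁) (M₂ := M₂) hn hk i (by omega) (by omega)
      rw [Ex_add, Ex_const] at h1
      have h2 := ih (by omega)
      push_cast
      linarith
  exact key M₁ le_rfl

lemma phase1_exc {n k M₁ M₂ : ℕ} (hn : 2 ≤ n) (hk : 1 ≤ k) (hM : M₁ ≤ numEdges n)
    (δ : ℝ) (hδ : 0 < δ) :
    Pr (fun σ : Ord n => (2 / 2 ^ k + δ) * n ≤ exc k (deg (run (theRule n k M₁ M₂) σ M₁))) ≤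
      M₁ * (4 * 2 ^ k * n) ^ 2 / (δ * (n : ℝ) ^ 2) ^ 2 := by
  have hn' : (2 : ℝ) ≤ n := by exact_mod_cast hn
  have hpos : (0 : ℝ) < 2 ^ k := by positivity
  refine (markov (fun σ : Ord n => tsq n (pot k (deg (run (theRule n k M₁ M₂) σ M₁))))
    (fun σ => by unfold tsq; positivity) ((δ * (n : ℝ) ^ 2) ^ 2) (by positivity) _ ?_).trans ?_
  · intro σ hσ
    generalize deg (run (theRule n k M₁ M₂) σ M₁) = d at *
    unfold tsq
    apply pow_le_pow_left₀ (by positivity)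
    apply le_max_of_le_left
    unfold pot
    have h1 : 0 ≤ dfc 1 d * wsum k d :=
      mul_nonneg (dfc_nonneg _ _) (sum_nonneg (fun _ _ => by positivity))
    have h2 : (2 : ℝ) ^ k / 2 * n * ((2 / 2 ^ k + δ) * n) ≤ (2 : ℝ) ^ k / 2 * n * exc k d :=
      mul_le_mul_of_nonneg_left hσ (by positivity)
    have h3 : (2 : ℝ) ^ k / 2 * n * ((2 / 2 ^ k + δ) * n) = n ^ 2 + 2 ^ k / 2 * (δ * n ^ 2) := by
      field_simp
    have h4 : (2 : ℝ) ≤ 2 ^ k := by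
      calc (2 : ℝ) = 2 ^ 1 := by norm_num
        _ ≤ _ := pow_le_pow_right₀ (by norm_num) hk
    have h5 : δ * (n : ℝ) ^ 2 ≤ 2 ^ k / 2 * (δ * n ^ 2) :=
      le_mul_of_one_le_left (by positivity) (by linarith)
    linarith
  · gcongr
    exact pot_bound hn hk hM

end RGP


namespace RGP

/-! ### Static probabilities: prescribed edges inside / outside a set of positions -/

/-- All edges of `A` sit at positions in `P`, none of the edges of `B` does. -/
def evt {n : ℕ} (P : Finset (Fin (numEdges n))) (A B : Finset (EdgeType n)) (σ : Ord n) : Prop :=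
  (∀ e ∈ A, σ.symm e ∈ P) ∧ ∀ e ∈ B, σ.symm e ∉ P

lemma Ex_swap_left {n : ℕ} (e e' : EdgeType n) (f : Ord n → ℝ) :
    Ex (fun σ => f (σ.trans (Equiv.swap e e'))) = Ex f := by
  unfold Ex
  congr 1
  have h : Function.Involutive (fun σ : Ord n => σ.trans (Equiv.swap e e')) := by
    intro σ
    apply Equiv.ext
    intro x
    simp
  exact Fintype.sum_equiv h.toPerm _ _ (fun σ => rfl)

lemma Pr_swap_left {n : ℕ} (e e' : EdgeType n) (p : Ord n → Prop) :
    Pr (fun σ => p (σ.trans (Equiv.swap e e'))) = Pr p := by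
  classical
  rw [Pr_eq_Ex, Pr_eq_Ex]
  convert Ex_swap_left e e' (fun σ => if p σ then (1 : ℝ) else 0) using 2

lemma Pr_insert_eq {n : ℕ} (P : Finset (Fin (numEdges n))) (A B : Finset (EdgeType n))
    (e e' : EdgeType n) (heA : e ∉ A) (heB : e ∉ B) (heA' : e' ∉ A) (heB' : e' ∉ B) :
    Pr (evt P (insert e A) B) = Pr (evt P (insert e' A) B) := by
  rw [← Pr_swap_left e e']
  congr 1
  funext σ
  have hfix : ∀ x : EdgeType n, x ≠ e → x ≠ e' → Equiv.swap e e' x = x :=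
    fun x h1 h2 => Equiv.swap_apply_of_ne_of_ne h1 h2
  have hA : ∀ x ∈ A, Equiv.swap e e' x = x := fun x hx =>
    hfix x (fun h => heA (h ▸ hx)) (fun h => heA' (h ▸ hx))
  have hB : ∀ x ∈ B, Equiv.swap e e' x = x := fun x hx =>
    hfix x (fun h => heB (h ▸ hx)) (fun h => heB' (h ▸ hx))
  unfold evt
  simp only [Finset.mem_insert, forall_eq_or_imp, Equiv.symm_trans_apply, Equiv.symm_swap,
    Equiv.swap_apply_left, eq_iff_iff]
  constructor
  · rintro ⟨⟨h1, h2⟩, h3⟩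
    refine ⟨⟨h1, fun x hx => ?_⟩, fun x hx => ?_⟩
    · have := h2 x hx; rwa [hA x hx] at this
    · have := h3 x hx; rwa [hB x hx] at this
  · rintro ⟨⟨h1, h2⟩, h3⟩
    refine ⟨⟨h1, fun x hx => ?_⟩, fun x hx => ?_⟩
    · rw [hA x hx]; exact h2 x hx
    · rw [hB x hx]; exact h3 x hx

lemma Pr_insert_in {n : ℕ} (P : Finset (Fin (numEdges n))) (A B : Finset (EdgeType n))
    (hAB : Disjoint A B) (e : EdgeType n) (heA : e ∉ A) (heB : e ∉ B) :
    ((numEdges n : ℝ) - (A.card + B.card : ℕ)) * Pr (evt P (insert e A) B) =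
      ((P.card : ℝ) - A.card) * Pr (evt P A B) := by
  classical
  have h1 : ∑ e' ∈ univ \ (A ∪ B), Pr (evt P (insert e' A) B) =
      ((numEdges n : ℝ) - (A.card + B.card : ℕ)) * Pr (evt P (insert e A) B) := by
    rw [sum_congr rfl (g := fun _ => Pr (evt P (insert e A) B))]
    · rw [sum_const, nsmul_eq_mul, card_sdiff_of_subset (subset_univ _), card_univ,
        card_edgeType, card_union_of_disjoint hAB, Nat.cast_sub]
      rw [← card_union_of_disjoint hAB, ← card_edgeType]
      exact card_le_univ _
    · intro x hx
      simp only [Finset.mem_sdiff, Finset.mem_univ, Finset.mem_union, true_and, not_or] at hx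
      exact Pr_insert_eq P A B x e hx.1 hx.2 heA heB
  rw [← h1]
  simp_rw [Pr_eq_Ex]
  rw [← Ex_sum, ← Ex_mul_left]
  congr 1
  funext σ
  by_cases h : evt P A B σ
  · have h2 : ∀ x ∈ univ \ (A ∪ B), (if evt P (insert x A) B σ then (1:ℝ) else 0) =
        if σ.symm x ∈ P then 1 else 0 := by
      intro x _
      have : evt P (insert x A) B σ ↔ σ.symm x ∈ P := by
        unfold evt at h ⊢
        simp only [Finset.mem_insert, forall_eq_or_imp]
        tauto
      simp [this]
    rw [sum_congr rfl h2, if_pos h, mul_one, sum_boole]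
    have h3 : (univ \ (A ∪ B)).filter (fun x => σ.symm x ∈ P) =
        (P.map σ.toEmbedding) \ A := by
      ext x
      simp only [mem_filter, Finset.mem_sdiff, Finset.mem_univ, Finset.mem_union, true_and, not_or,
        mem_map_equiv]
      have := h.2 x
      tauto
    rw [h3, card_sdiff_of_subset, card_map, Nat.cast_sub]
    · rw [← card_map σ.toEmbedding]
      apply card_le_card
      intro x hx
      rw [mem_map_equiv]; exact h.1 x hx
    · intro x hx
      rw [mem_map_equiv]; exact h.1 x hx
  · rw [if_neg h, mul_zero]
    apply sum_eq_zero
    intro x _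
    rw [if_neg]
    intro h'
    exact h ⟨fun y hy => h'.1 y (mem_insert_of_mem hy), h'.2⟩

lemma Pr_insert_out {n : ℕ} (P : Finset (Fin (numEdges n))) (A B : Finset (EdgeType n))
    (hAB : Disjoint A B) (e : EdgeType n) (heA : e ∉ A) (heB : e ∉ B) :
    ((numEdges n : ℝ) - (A.card + B.card : ℕ)) * Pr (evt P A (insert e B)) =
      ((numEdges n : ℝ) - P.card - B.card) * Pr (evt P A B) := by
  classical
  have h1 := Pr_insert_in P A B hAB e heA heB
  have h2 : Pr (evt P A B) = Pr (evt P (insert e A) B) + Pr (evt P A (insert e B)) := by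
    rw [Pr_eq_Ex, Pr_eq_Ex, Pr_eq_Ex, ← Ex_add]
    congr 1
    funext σ
    unfold evt
    simp only [Finset.mem_insert, forall_eq_or_imp]
    by_cases he : σ.symm e ∈ P <;> simp [he]
  push_cast at *
  have h3 : Pr (evt P A (insert e B)) = Pr (evt P A B) - Pr (evt P (insert e A) B) := by
    linarith
  rw [h3, mul_sub, h1]
  ring

lemma descFac_succ (n k : ℕ) :
    ((n.descFactorial (k + 1) : ℕ) : ℝ) = ((n : ℝ) - k) * (n.descFactorial k : ℕ) := by
  rw [Nat.descFactorial_succ, Nat.cast_mul]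
  rcases le_or_gt k n with h | h
  · rw [Nat.cast_sub h]
  · rw [Nat.descFactorial_eq_zero_iff_lt.2 h]; simp

lemma Pr_evt_mul {n : ℕ} (P : Finset (Fin (numEdges n))) (A B : Finset (EdgeType n))
    (hAB : Disjoint A B) :
    Pr (evt P A B) * ((numEdges n).descFactorial (A.card + B.card) : ℕ) =
      (P.card.descFactorial A.card : ℕ) * ((numEdges n - P.card).descFactorial B.card : ℕ) := by
  classical
  have hP : P.card ≤ numEdges n := by simpa using card_le_univ P
  induction B using Finset.induction_on with
  | empty =>
    induction A using Finset.induction_on with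
    | empty =>
      have : Pr (evt P ∅ ∅) = 1 := by
        rw [Pr_eq_Ex]
        simpa [evt] using Ex_const (n := n) 1
      simp [this]
    | insert e A he ih =>
      have h := Pr_insert_in P A ∅ (by simp) e he (by simp)
      have ih := ih (by simp)
      simp only [card_empty, add_zero, Nat.descFactorial_zero, Nat.cast_one, mul_one] at *
      rw [card_insert_of_notMem he, descFac_succ, descFac_succ, ← ih]
      linear_combination ((numEdges n).descFactorial A.card : ℝ) * h
  | insert e B he ih =>
    rw [disjoint_insert_right] at hAB
    have h := Pr_insert_out P A B hAB.2 e hAB.1 he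
    have ih := ih hAB.2
    rw [card_insert_of_notMem he, ← add_assoc, descFac_succ, descFac_succ, Nat.cast_sub hP]
    linear_combination ((numEdges n).descFactorial (A.card+B.card) : ℝ) * h +
      ((numEdges n : ℝ) - P.card - B.card) * ih

lemma Pr_evt {n : ℕ} (P : Finset (Fin (numEdges n))) (A B : Finset (EdgeType n))
    (hAB : Disjoint A B) :
    Pr (evt P A B)  =
      (P.card.descFactorial A.card : ℕ) * ((numEdges n - P.card).descFactorial B.card : ℕ) /
      ((numEdges n).descFactorial (A.card + B.card) : ℕ) := by
  rw [eq_div_iff, Pr_evt_mul P A B hAB]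
  have : A.card + B.card ≤ numEdges n := by
    rw [← card_union_of_disjoint hAB, ← card_edgeType]
    exact card_le_univ _
  have h2 : (numEdges n).descFactorial (A.card + B.card) ≠ 0 := by
    rw [Ne, Nat.descFactorial_eq_zero_iff_lt]; omega
  exact_mod_cast h2

end RGP


namespace RGP

/-! ### Degrees of the random graph as static events -/

/-- The positions in `[a, b)`. -/
def Pos (n a b : ℕ) : Finset (Fin (numEdges n)) := univ.filter (fun j => a ≤ (j : ℕ) ∧ (j : ℕ) < b)

lemma card_Pos {n a b : ℕ} (hb : b ≤ numEdges n) : (Pos n a b).card = b - a := by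
  rw [← card_map Fin.valEmbedding, ← Nat.card_Ico a b]
  congr 1
  ext x
  simp only [Pos, Finset.mem_map, mem_filter, Finset.mem_univ, true_and, Fin.valEmbedding_apply,
    Finset.mem_Ico]
  constructor
  · rintro ⟨y, h, rfl⟩; exact h
  · intro h; exact ⟨⟨x, by omega⟩, h, rfl⟩

/-- The edges at `v`. -/
def star {n : ℕ} (v : Fin n) : Finset (EdgeType n) := univ.filter (fun e => v ∈ e.1)

/-- The edge `uv`. -/
def edge {n : ℕ} (u v : Fin n) (h : u ≠ v) : EdgeType n := ⟨s(u, v), by simpa using h⟩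

lemma card_star {n : ℕ} (v : Fin n) : (star v).card = n - 1 := by
  have : (univ.erase v).card = n - 1 := by simp
  rw [← this]
  have h2 : ((star v).map (Function.Embedding.subtype _)) =
      (univ.erase v).image (fun u => s(v, u)) := by
    ext e
    simp only [star, Finset.mem_map, mem_filter, Finset.mem_univ, true_and,
      Function.Embedding.subtype_apply, Subtype.exists, exists_and_right, exists_eq_right,
      Finset.mem_image, Finset.mem_erase, and_true]
    constructor
    · rintro ⟨h, hv⟩
      obtain ⟨u, rfl⟩ := hv
      refine ⟨u, ?_, rfl⟩
      rintro rfl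
      exact h (by simp)
    · rintro ⟨u, hu, rfl⟩
      exact ⟨by simpa using hu.symm, by simp⟩
  rw [← card_map (Function.Embedding.subtype _), h2, card_image_of_injective]
  intro a b hab
  rcases (by simpa using hab : a = b ∨ v = b ∧ a = v) with h | ⟨h, h2⟩
  · exact h
  · exact h2.trans h

lemma cnt_eq {n : ℕ} (σ : Ord n) (v : Fin n) (a b : ℕ) :
    cnt σ v a b = ((star v).filter (fun e => σ.symm e ∈ Pos n a b)).card := by
  unfold cnt
  rw [← card_map σ.toEmbedding]
  congr 1
  ext e
  simp only [Finset.mem_map_equiv, mem_filter, Finset.mem_univ, true_and, star, Pos,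
    Equiv.apply_symm_apply]
  tauto

lemma Pr_card_le {n : ℕ} (P : Finset (Fin (numEdges n))) (D : Finset (EdgeType n)) (j : ℕ)
    (hj : j ≤ D.card) :
    Pr (fun σ : Ord n => (D.filter (fun e => σ.symm e ∈ P)).card = j) =
      (D.card.choose j : ℕ) * ((P.card.descFactorial j : ℕ) *
        ((numEdges n - P.card).descFactorial (D.card - j) : ℕ) /
        ((numEdges n).descFactorial D.card : ℕ)) := by
  classical
  have h1 : ∀ σ : Ord n, (if (D.filter (fun e => σ.symm e ∈ P)).card = j then (1:ℝ) else 0) =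
      ∑ A ∈ powersetCard j D, if evt P A (D \ A) σ then (1:ℝ) else 0 := by
    intro σ
    have h2 : ∀ A ∈ powersetCard j D, (if evt P A (D \ A) σ then (1:ℝ) else 0) =
        if A = D.filter (fun e => σ.symm e ∈ P) then 1 else 0 := by
      intro A hA
      rw [mem_powersetCard] at hA
      have : evt P A (D \ A) σ ↔ A = D.filter (fun e => σ.symm e ∈ P) := by
        unfold evt
        constructor
        · rintro ⟨h3, h4⟩
          ext x
          rw [mem_filter]
          constructor
          · intro hx; exact ⟨hA.1 hx, h3 x hx⟩
          · rintro ⟨hx, hx'⟩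
            by_contra hc
            exact h4 x (by rw [Finset.mem_sdiff]; exact ⟨hx, hc⟩) hx'
        · intro h
          constructor
          · intro e he; rw [h, mem_filter] at he; exact he.2
          · intro e he
            rw [Finset.mem_sdiff] at he
            intro hc
            apply he.2
            rw [h, mem_filter]; exact ⟨he.1, hc⟩
      simp only [this]
    rw [sum_congr rfl h2, sum_ite_eq']
    simp [mem_powersetCard]
  rw [Pr_eq_Ex']
  simp_rw [h1]
  rw [Ex_sum, sum_congr rfl (g := fun _ => ((P.card.descFactorial j : ℕ) *
        ((numEdges n - P.card).descFactorial (D.card - j) : ℕ) /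
        ((numEdges n).descFactorial D.card : ℕ) : ℝ))]
  · rw [sum_const, card_powersetCard, nsmul_eq_mul]
  · intro A hA
    rw [mem_powersetCard] at hA
    rw [← Pr_eq_Ex, Pr_evt P A (D \ A) disjoint_sdiff, card_sdiff_of_subset hA.1, hA.2,
      Nat.add_sub_cancel' hj]

/-- Two prescribed disjoint sets with prescribed counts. -/
lemma Pr_two_le {n : ℕ} (P : Finset (Fin (numEdges n))) (D₁ D₂ : Finset (EdgeType n))
    (A₀ B₀ : Finset (EdgeType n)) (h12 : Disjoint D₁ D₂) (h1A : Disjoint D₁ A₀)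
    (h2A : Disjoint D₂ A₀) (h1B : Disjoint D₁ B₀) (h2B : Disjoint D₂ B₀) (hAB : Disjoint A₀ B₀)
    (j : ℕ) (hj : j ≤ D₁.card) (hc : D₁.card = D₂.card) :
    Pr (fun σ : Ord n => evt P A₀ B₀ σ ∧ (D₁.filter (fun e => σ.symm e ∈ P)).card = j ∧
        (D₂.filter (fun e => σ.symm e ∈ P)).card = j) ≤
      ((D₁.card.choose j : ℕ) : ℝ) ^ 2 * ((P.card.descFactorial (2 * j + A₀.card) : ℕ) *
        ((numEdges n - P.card).descFactorial (2 * (D₁.card - j) + B₀.card) : ℕ) /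
        ((numEdges n).descFactorial (2 * D₁.card + A₀.card + B₀.card) : ℕ)) := by
  classical
  refine le_trans (Pr_mono (q := fun σ => ∃ A ∈ powersetCard j D₁ ×ˢ powersetCard j D₂,
    evt P (A.1 ∪ A.2 ∪ A₀) ((D₁ \ A.1) ∪ (D₂ \ A.2) ∪ B₀) σ) ?_) ?_
  · rintro σ ⟨h1, h2, h3⟩
    refine ⟨(D₁.filter (fun e => σ.symm e ∈ P), D₂.filter (fun e => σ.symm e ∈ P)), ?_, ?_, ?_⟩
    · simp only [mem_product, mem_powersetCard]
      exact ⟨⟨filter_subset _ _, h2⟩, ⟨filter_subset _ _, h3⟩⟩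
    · intro e he
      simp only [Finset.mem_union, mem_filter] at he
      rcases he with (he | he) | he
      · exact he.2
      · exact he.2
      · exact h1.1 e he
    · intro e he
      simp only [Finset.mem_union, mem_filter, Finset.mem_sdiff] at he
      rcases he with (he | he) | he
      · exact fun h => he.2 ⟨he.1, h⟩
      · exact fun h => he.2 ⟨he.1, h⟩
      · exact h1.2 e he
  · refine le_trans (Pr_exists_le _ _) ?_
    rw [sum_congr rfl (g := fun _ => ((P.card.descFactorial (2 * j + A₀.card) : ℕ) *
        ((numEdges n - P.card).descFactorial (2 * (D₁.card - j) + B₀.card) : ℕ) /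
        ((numEdges n).descFactorial (2 * D₁.card + A₀.card + B₀.card) : ℕ) : ℝ))]
    · rw [sum_const, card_product, card_powersetCard, card_powersetCard, nsmul_eq_mul, ← hc]
      push_cast
      rw [sq]
    · rintro ⟨A₁, A₂⟩ hA
      simp only [mem_product, mem_powersetCard] at hA
      obtain ⟨⟨s1, c1⟩, s2, c2⟩ := hA
      have d1 : Disjoint A₁ A₂ := disjoint_of_subset_left s1 (disjoint_of_subset_right s2 h12)
      have d2 : Disjoint (A₁ ∪ A₂) A₀ := by
        rw [disjoint_union_left]
        exact ⟨disjoint_of_subset_left s1 h1A, disjoint_of_subset_left s2 h2A⟩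
      have t1 : D₁ \ A₁ ⊆ D₁ := sdiff_subset
      have t2 : D₂ \ A₂ ⊆ D₂ := sdiff_subset
      have d3 : Disjoint (D₁ \ A₁) (D₂ \ A₂) :=
        disjoint_of_subset_left t1 (disjoint_of_subset_right t2 h12)
      have d4 : Disjoint ((D₁ \ A₁) ∪ (D₂ \ A₂)) B₀ := by
        rw [disjoint_union_left]
        exact ⟨disjoint_of_subset_left t1 h1B, disjoint_of_subset_left t2 h2B⟩
      have d5 : Disjoint (A₁ ∪ A₂ ∪ A₀) ((D₁ \ A₁) ∪ (D₂ \ A₂) ∪ B₀) := by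
        simp only [disjoint_union_left, disjoint_union_right]
        have x1 : Disjoint A₁ (D₁ \ A₁) := disjoint_sdiff
        have x2 : Disjoint A₂ (D₂ \ A₂) := disjoint_sdiff
        have x3 : Disjoint A₁ (D₂ \ A₂) :=
          disjoint_of_subset_left s1 (disjoint_of_subset_right t2 h12)
        have x4 : Disjoint A₂ (D₁ \ A₁) :=
          disjoint_of_subset_left s2 (disjoint_of_subset_right t1 h12.symm)
        have x5 : Disjoint A₁ B₀ := disjoint_of_subset_left s1 h1B
        have x6 : Disjoint A₂ B₀ := disjoint_of_subset_left s2 h2B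
        have x7 : Disjoint A₀ (D₁ \ A₁) := disjoint_of_subset_right t1 h1A.symm
        have x8 : Disjoint A₀ (D₂ \ A₂) := disjoint_of_subset_right t2 h2A.symm
        tauto
      rw [Pr_evt _ _ _ d5, card_union_of_disjoint d2, card_union_of_disjoint d1,
        card_union_of_disjoint d4, card_union_of_disjoint d3, card_sdiff_of_subset s1,
        card_sdiff_of_subset s2, c1, c2, ← hc]
      have e1 : j + j + A₀.card = 2 * j + A₀.card := by ring
      have e2 : D₁.card - j + (D₁.card - j) + B₀.card = 2 * (D₁.card - j) + B₀.card := by ring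
      have e3 : 2 * j + A₀.card + (2 * (D₁.card - j) + B₀.card) =
        2 * D₁.card + A₀.card + B₀.card := by omega
      rw [e1, e2, e3]

lemma edge_mem_star_left {n : ℕ} (u v : Fin n) (h : u ≠ v) : edge u v h ∈ star u := by
  simp [star, edge]

lemma edge_mem_star_right {n : ℕ} (u v : Fin n) (h : u ≠ v) : edge u v h ∈ star v := by
  simp [star, edge]

lemma star_inter {n : ℕ} (u v : Fin n) (h : u ≠ v) :
    Disjoint ((star u).erase (edge u v h)) ((star v).erase (edge u v h)) := by
  rw [Finset.disjoint_left]
  rintro ⟨e, he⟩ h1 h2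
  simp only [Finset.mem_erase, star, mem_filter, Finset.mem_univ, true_and, edge, ne_eq,
    Subtype.mk.injEq] at h1 h2
  exact h1.1 (((Sym2.mem_and_mem_iff h).1 ⟨h1.2, h2.2⟩))

/-- Exact-degree probability. -/
noncomputable def pf (N m d r : ℕ) : ℝ :=
  (d.choose r : ℕ) * ((m.descFactorial r : ℕ) * ((N - m).descFactorial (d - r) : ℕ) /
    (N.descFactorial d : ℕ))

lemma Pr_deg_eq {n : ℕ} (v : Fin n) (a b r : ℕ) (hb : b ≤ numEdges n) (hr : r ≤ n - 1) :
    Pr (fun σ : Ord n => cnt σ v a b = r) = pf (numEdges n) (b - a) (n - 1) r := by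
  simp_rw [cnt_eq]
  rw [Pr_card_le _ _ _ (by rwa [card_star]), card_star, card_Pos hb]
  rfl

lemma Pr_deg_two {n : ℕ} (u v : Fin n) (huv : u ≠ v) (b r : ℕ) (hb : b ≤ numEdges n) (hr : 1 ≤ r)
    (hr' : r + 2 ≤ n) :
    Pr (fun σ : Ord n => cnt σ u 0 b = r ∧ cnt σ v 0 b = r) ≤
      (((n - 2).choose r : ℕ) : ℝ) ^ 2 * ((b.descFactorial (2 * r) : ℕ) *
        ((numEdges n - b).descFactorial (2 * (n - 2 - r) + 1) : ℕ) /
        ((numEdges n).descFactorial (2 * (n - 2) + 1) : ℕ)) +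
      (((n - 2).choose (r - 1) : ℕ) : ℝ) ^ 2 * ((b.descFactorial (2 * (r - 1) + 1) : ℕ) *
        ((numEdges n - b).descFactorial (2 * (n - 2 - (r - 1))) : ℕ) /
        ((numEdges n).descFactorial (2 * (n - 2) + 1) : ℕ)) := by
  classical
  set e := edge u v huv with he
  have heu := edge_mem_star_left u v huv
  have hev := edge_mem_star_right u v huv
  set P := Pos n 0 b with hP
  have hPc : P.card = b := by rw [hP, card_Pos hb]; omega
  have cu : ((star u).erase e).card = n - 2 := by
    rw [card_erase_of_mem heu, card_star]; omega
  have cv : ((star v).erase e).card = n - 2 := by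
    rw [card_erase_of_mem hev, card_star]; omega
  have hdis := star_inter u v huv
  have H1 := Pr_two_le P ((star u).erase e) ((star v).erase e) ∅ {e} hdis (by simp) (by simp)
    (by simp) (by simp) (by simp) r (by omega) (by omega)
  have H2 := Pr_two_le P ((star u).erase e) ((star v).erase e) {e} ∅ hdis (by simp) (by simp)
    (by simp) (by simp) (by simp) (r-1) (by omega) (by omega)
  simp only [cu, hPc, card_empty, card_singleton, add_zero] at H1 H2
  refine le_trans ?_ (add_le_add H1 H2)
  refine le_trans (Pr_mono ?_) (Pr_or _ _)
  intro σ
  rw [cnt_eq, cnt_eq]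
  have key : ∀ w, e ∈ star w →
      ((star w).filter (fun e => σ.symm e ∈ P)).card =
        (((star w).erase e).filter (fun e => σ.symm e ∈ P)).card +
          if σ.symm e ∈ P then 1 else 0 := by
    intro w hw
    conv_lhs => rw [← insert_erase hw, filter_insert]
    split_ifs
    · rw [card_insert_of_notMem]; simp
    · rfl
  rw [key u heu, key v hev]
  rintro ⟨h1, h2⟩
  by_cases h : σ.symm e ∈ P
  · right
    rw [if_pos h] at h1 h2
    exact ⟨⟨by simpa using h, by simp⟩, by omega, by omega⟩
  · left
    rw [if_neg h] at h1 h2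
    exact ⟨⟨by simp, by simpa using h⟩, by omega, by omega⟩

end RGP


namespace RGP

/-! ### Estimates for falling factorials -/

/-- Falling factorial, as a real number. -/
noncomputable def fl (n k : ℕ) : ℝ := (n.descFactorial k : ℕ)

lemma fl_succ (n k : ℕ) : fl n (k + 1) = ((n : ℝ) - k) * fl n k := descFac_succ n k

lemma fl_zero (n : ℕ) : fl n 0 = 1 := by simp [fl]

lemma fl_nonneg (n k : ℕ) : 0 ≤ fl n k := by unfold fl; positivity

lemma fl_pos {n k : ℕ} (h : k ≤ n) : 0 < fl n k := by
  unfold fl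
  have : 0 < n.descFactorial k := Nat.pos_of_ne_zero (by
    rw [Ne, Nat.descFactorial_eq_zero_iff_lt]; omega)
  exact_mod_cast this

lemma fl_add (n a b : ℕ) : fl n (a + b) = fl (n - a) b * fl n a := by
  unfold fl
  have := Nat.descFactorial_mul_descFactorial (n := n) (k := a) (m := a + b) (by omega)
  rw [← this]
  simp

lemma fl_le_left {n m : ℕ} (h : n ≤ m) (k : ℕ) : fl n k ≤ fl m k := by
  unfold fl
  exact_mod_cast Nat.descFactorial_le k h

lemma fl_ratio_up (R s j : ℕ) (h : s + j ≤ R) :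
    fl (R - s) j ≤ Real.exp (-((s : ℝ) * j / R)) * fl R j := by
  induction j with
  | zero => simp [fl_zero]
  | succ j ih =>
    have ih := ih (by omega)
    have hR : (0 : ℝ) < R := by
      have : 0 < R := by omega
      exact_mod_cast this
    have h' : (s : ℝ) + (j + 1) ≤ R := by exact_mod_cast h
    have hs0 : (0 : ℝ) ≤ s := by positivity
    have hj0 : (0 : ℝ) ≤ j := by positivity
    rw [fl_succ, fl_succ, Nat.cast_sub (by omega)]
    have e1 : Real.exp (-((s : ℝ) * (j + 1 : ℕ) / R)) =
        Real.exp (-((s : ℝ) / R)) * Real.exp (-((s : ℝ) * j / R)) := by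
      rw [← Real.exp_add]; congr 1; push_cast; field_simp; ring
    have h1 : (R : ℝ) - s - j ≤ Real.exp (-((s : ℝ) / R)) * (R - j) := by
      have h2 : 1 - (s : ℝ) / R ≤ Real.exp (-((s : ℝ) / R)) := by
        have := Real.add_one_le_exp (-((s : ℝ) / R)); linarith
      have h3 : (1 - (s : ℝ) / R) * (R - j) ≤ Real.exp (-((s : ℝ) / R)) * (R - j) :=
        mul_le_mul_of_nonneg_right h2 (by linarith)
      have h4 : (1 - (s : ℝ) / R) * (R - j) = R - s - j + s * j / R := by field_simp; ring
      have h5 : 0 ≤ (s : ℝ) * j / R := by positivity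
      linarith
    rw [e1]
    calc ((R : ℝ) - s - j) * fl (R - s) j
        ≤ (Real.exp (-((s : ℝ) / R)) * (R - j)) * (Real.exp (-((s : ℝ) * j / R)) * fl R j) := by
          apply mul_le_mul h1 ih (fl_nonneg _ _)
          apply mul_nonneg (Real.exp_pos _).le; linarith
      _ = _ := by ring

lemma fl_ratio_low_aux (N s j J : ℕ) (hj : j ≤ J) (h : s + J < N) :
    fl N j ≤ Real.exp ((s : ℝ) * j / (N - s - J)) * fl (N - s) j := by
  induction j with
  | zero => simp [fl_zero]
  | succ j ih =>
    have ih := ih (by omega)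
    have h' : (s : ℝ) + J < N := by exact_mod_cast h
    have hjJ : (j : ℝ) + 1 ≤ J := by exact_mod_cast hj
    have hs0 : (0 : ℝ) ≤ s := by positivity
    have hj0 : (0 : ℝ) ≤ j := by positivity
    rw [fl_succ, fl_succ, Nat.cast_sub (by omega)]
    have e1 : Real.exp ((s : ℝ) * (j + 1 : ℕ) / (N - s - J)) =
        Real.exp ((s : ℝ) / (N - s - J)) * Real.exp ((s : ℝ) * j / (N - s - J)) := by
      rw [← Real.exp_add]; congr 1; push_cast; ring
    have hD : (0 : ℝ) < N - s - J := by linarith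
    have h1 : (N : ℝ) - j ≤ Real.exp ((s : ℝ) / (N - s - J)) * (N - s - j) := by
      have h2 : 1 + (s : ℝ) / (N - s - J) ≤ Real.exp ((s : ℝ) / (N - s - J)) := by
        have := Real.add_one_le_exp ((s : ℝ) / (N - s - J)); linarith
      have h3 : (1 + (s : ℝ) / (N - s - J)) * (N - s - j) ≤
          Real.exp ((s : ℝ) / (N - s - J)) * (N - s - j) :=
        mul_le_mul_of_nonneg_right h2 (by linarith)
      have h4 : (s : ℝ) ≤ (s : ℝ) / (N - s - J) * (N - s - j) := by
        rw [div_mul_eq_mul_div, le_div_iff₀ hD]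
        apply mul_le_mul_of_nonneg_left _ hs0
        linarith
      linarith
    rw [e1]
    calc ((N : ℝ) - j) * fl N j
        ≤ (Real.exp ((s : ℝ) / (N - s - J)) * (N - s - j)) *
          (Real.exp ((s : ℝ) * j / (N - s - J)) * fl (N - s) j) := by
          apply mul_le_mul h1 ih (fl_nonneg _ _)
          apply mul_nonneg (Real.exp_pos _).le; linarith
      _ = _ := by ring

lemma fl_ratio_low (N s j : ℕ) (h : s + j < N) :
    fl N j ≤ Real.exp ((s : ℝ) * j / (N - s - j)) * fl (N - s) j :=
  fl_ratio_low_aux N s j j le_rfl h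

lemma fl_le_pow_ratio (N p j : ℕ) (hp : p ≤ N) (hj : j ≤ p) (hN : 0 < N) :
    fl p j ≤ ((p : ℝ) / N) ^ j * fl N j := by
  induction j with
  | zero => simp [fl_zero]
  | succ j ih =>
    have ih := ih (by omega)
    have hN' : (0 : ℝ) < N := by exact_mod_cast hN
    have hp' : (p : ℝ) ≤ N := by exact_mod_cast hp
    have hjp : (j : ℝ) + 1 ≤ p := by exact_mod_cast hj
    rw [fl_succ, fl_succ, pow_succ]
    have h1 : (p : ℝ) - j ≤ (p : ℝ) / N * (N - j) := by
      rw [div_mul_eq_mul_div, le_div_iff₀ hN']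
      have : (0 : ℝ) ≤ j := by positivity
      nlinarith
    calc ((p : ℝ) - j) * fl p j
        ≤ ((p : ℝ) / N * (N - j)) * (((p : ℝ) / N) ^ j * fl N j) := by
          apply mul_le_mul h1 ih (fl_nonneg _ _)
          apply mul_nonneg (by positivity); linarith
      _ = _ := by ring

lemma fl_ge_pow (m r : ℕ) (h : r ≤ m) : ((m : ℝ) - r) ^ r ≤ fl m r := by
  have h1 := Nat.pow_sub_le_descFactorial m r
  have h2 : (m - r) ^ r ≤ (m + 1 - r) ^ r := Nat.pow_le_pow_left (by omega) r
  have h3 : (((m - r) ^ r : ℕ) : ℝ) ≤ fl m r := by unfold fl; exact_mod_cast h2.trans h1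
  rw [Nat.cast_pow, Nat.cast_sub h] at h3
  exact h3

lemma fl_le_pow (N r : ℕ) : fl N r ≤ (N : ℝ) ^ r := by
  unfold fl; exact_mod_cast Nat.descFactorial_le_pow N r

lemma pf_eq (N m d r : ℕ) :
    pf N m d r = (d.choose r : ℕ) * (fl m r * fl (N - m) (d - r) / fl N d) := rfl

/-- Upper bound for the probability of having exactly `j` edges. -/
lemma pf_le (N p d j : ℕ) (hp : p ≤ N) (hj : j ≤ p) (hjd : j ≤ d) (h : p + d ≤ N + j) (hN : j < N) :
    pf N p d j ≤ ((d : ℝ) * p / N) ^ j *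
      Real.exp (-(((p : ℝ) - j) * (d - j) / N)) := by
  have hN' : (0 : ℝ) < N := by exact_mod_cast (by omega : 0 < N)
  have hNj : (0 : ℝ) < ((N - j : ℕ) : ℝ) := by exact_mod_cast (by omega : 0 < N - j)
  rw [pf_eq]
  have h1 := fl_le_pow_ratio N p j hp hj (by omega)
  have h2 := fl_ratio_up (N - j) (p - j) (d - j) (by omega)
  rw [show N - j - (p - j) = N - p by omega] at h2
  have h3 : fl N d = fl (N - j) (d - j) * fl N j := by
    rw [← fl_add]; congr 1; omega
  have h4 : ((d.choose j : ℕ) : ℝ) ≤ (d : ℝ) ^ j := by exact_mod_cast Nat.choose_le_pow d j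
  have hp1 : 0 < fl N j := fl_pos (by omega)
  have hp2 : 0 < fl (N - j) (d - j) := fl_pos (by omega)
  have h5 : Real.exp (-(((p - j : ℕ) : ℝ) * (d - j : ℕ) / (N - j : ℕ))) ≤
      Real.exp (-(((p : ℝ) - j) * (d - j) / N)) := by
    apply Real.exp_le_exp.2
    rw [Nat.cast_sub hj, Nat.cast_sub hjd]
    apply neg_le_neg
    apply div_le_div_of_nonneg_left
    · apply mul_nonneg
      · have : (j : ℝ) ≤ p := by exact_mod_cast hj
        linarith
      · have : (j : ℝ) ≤ d := by exact_mod_cast hjd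
        linarith
    · exact hNj
    · exact_mod_cast Nat.sub_le N j
  have h6 := h2.trans (mul_le_mul_of_nonneg_right h5 hp2.le)
  set X := Real.exp (-(((p : ℝ) - j) * (d - j) / N))
  have hX : 0 < X := Real.exp_pos _
  rw [h3]
  calc ((d.choose j : ℕ) : ℝ) * (fl p j * fl (N - p) (d - j) / (fl (N - j) (d - j) * fl N j))
      ≤ (d : ℝ) ^ j * ((((p : ℝ) / N) ^ j * fl N j) * (X * fl (N - j) (d - j)) /
        (fl (N - j) (d - j) * fl N j)) := by
        apply mul_le_mul h4 _ _ (by positivity)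
        · apply div_le_div_of_nonneg_right _ (by positivity)
          exact mul_le_mul h1 h6 (fl_nonneg _ _) (by positivity)
        · have := fl_nonneg p j
          have := fl_nonneg (N - p) (d - j)
          positivity
    _ = _ := by
        rw [mul_div_assoc (d : ℝ), mul_pow]
        field_simp

/-- Lower bound for the probability of having exactly `r` edges. -/
lemma pf_ge (N m d r : ℕ) (hr : r ≤ m) (hrd : r ≤ d) (h : m + d < N) :
    1 / (r.factorial : ℝ) * (((d : ℝ) + 1 - r) * (m - r) / N) ^ r *
      Real.exp (-((m : ℝ) * d / (N - m - d))) ≤ pf N m d r := by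
  have hN' : (0 : ℝ) < N := by exact_mod_cast (by omega : 0 < N)
  rw [pf_eq]
  have h0 : (((d + 1 - r : ℕ) ^ r : ℕ) : ℝ) ≤ (r.factorial : ℝ) * (d.choose r : ℕ) := by
    rw [← Nat.cast_mul, ← Nat.descFactorial_eq_factorial_mul_choose]
    exact_mod_cast Nat.pow_sub_le_descFactorial d r
  rw [Nat.cast_pow, Nat.cast_sub (by omega)] at h0
  push_cast at h0
  have h1 := fl_ge_pow m r hr
  have h1' := fl_le_pow N r
  have h2 := fl_ratio_low (N - r) (m - r) (d - r) (by omega)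
  rw [show N - r - (m - r) = N - m by omega] at h2
  have h3 : fl N d = fl (N - r) (d - r) * fl N r := by
    rw [← fl_add]; congr 1; omega
  have hp1 : 0 < fl N r := fl_pos (by omega)
  have hp2 : 0 < fl (N - r) (d - r) := fl_pos (by omega)
  have hp3 : 0 < fl (N - m) (d - r) := fl_pos (by omega)
  have hmd : (m : ℝ) + d < N := by exact_mod_cast h
  have hrm : (r : ℝ) ≤ m := by exact_mod_cast hr
  have hrd' : (r : ℝ) ≤ d := by exact_mod_cast hrd
  have hr0 : (0 : ℝ) ≤ r := by positivity
  have h5 : Real.exp (((m - r : ℕ) : ℝ) * (d - r : ℕ) / ((N - r : ℕ) - (m - r : ℕ) - (d - r : ℕ)))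
      ≤ Real.exp ((m : ℝ) * d / (N - m - d)) := by
    apply Real.exp_le_exp.2
    rw [Nat.cast_sub hr, Nat.cast_sub hrd, Nat.cast_sub (by omega)]
    apply div_le_div₀
    · positivity
    · apply mul_le_mul <;> linarith
    · linarith
    · linarith
  have h6 := h2.trans (mul_le_mul_of_nonneg_right h5 hp3.le)
  set X := Real.exp ((m : ℝ) * d / (N - m - d)) with hXdef
  have hX : 0 < X := Real.exp_pos _
  rw [h3, Real.exp_neg, ← hXdef]
  have hfac : (0 : ℝ) < r.factorial := by exact_mod_cast Nat.factorial_pos r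
  have hA : ((d : ℝ) + 1 - r) ^ r / r.factorial ≤ (d.choose r : ℕ) := by
    rw [div_le_iff₀ hfac]; linarith
  have hB : ((m : ℝ) - r) ^ r / (N : ℝ) ^ r ≤ fl m r / fl N r := by
    apply div_le_div₀ (fl_nonneg _ _) h1 hp1 h1'
  have hC : X⁻¹ ≤ fl (N - m) (d - r) / fl (N - r) (d - r) := by
    rw [le_div_iff₀ hp2, inv_mul_le_iff₀ hX]; exact h6
  have hd1 : 0 ≤ (d : ℝ) + 1 - r := by linarith
  have hm1 : 0 ≤ (m : ℝ) - r := by linarith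
  calc _ = (((d : ℝ) + 1 - r) ^ r / r.factorial) * ((((m : ℝ) - r) ^ r / (N : ℝ) ^ r) * X⁻¹) := by
        rw [div_pow, mul_pow]; ring
    _ ≤ (d.choose r : ℕ) * ((fl m r / fl N r) * (fl (N - m) (d - r) / fl (N - r) (d - r))) := by
        have hf := fl_nonneg m r
        apply mul_le_mul hA _ (by positivity) (by positivity)
        apply mul_le_mul hB hC (by positivity) (by positivity)
    _ = _ := by
        rw [div_mul_div_comm, mul_comm (fl N r)]

end RGP


namespace RGP

/-! ### Pairs of vertices and the second moment -/

/-- Bound for the ratio of pair probability to the square of the probability. -/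
noncomputable def rho (n N m r : ℝ) : ℝ :=
  Real.exp ((n - 1) * (n - 2) / (N - 2 * n + 3) - (n - 1 - r) * (n - 2 - r) / N) *
      ((N - n + 2) / (N - m - n + r + 2)) +
    (r / (n - 1)) ^ 2 * ((N - n + 2) * Real.exp ((n - 1) * (n - 2) / (N - 2 * n + 3)) / (m - r + 1))

lemma pair_den (n N : ℕ) (hn : 3 ≤ n) (hN : 2 * n ≤ N) :
    fl N (n - 1) ^ 2 ≤ Real.exp (((n : ℝ) - 1) * (n - 2) / (N - 2 * n + 3)) * ((N : ℝ) - n + 2) *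
      fl N (2 * (n - 2) + 1) := by
  obtain ⟨n, rfl⟩ : ∃ a, n = a + 2 := ⟨n - 2, by omega⟩
  rw [show n + 2 - 1 = n + 1 by omega, show 2 * (n + 2 - 2) + 1 = (n + 1) + n by omega]
  have h2 := fl_ratio_low N (n + 1) n (by omega)
  rw [sq, fl_add N (n + 1) n]
  have h3 := fl_succ N n
  have hp := fl_pos (n := N) (k := n + 1) (by omega)
  have e1 : ((n + 2 : ℕ) : ℝ) - 1 = ((n + 1 : ℕ) : ℝ) := by push_cast; ring
  have e2 : ((n + 2 : ℕ) : ℝ) - 2 = n := by push_cast; ring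
  have e3 : ((N : ℝ) - 2 * (n + 2 : ℕ) + 3) = (N : ℝ) - (n + 1 : ℕ) - n := by push_cast; ring
  have e4 : ((N : ℝ) - (n + 2 : ℕ) + 2) = N - n := by push_cast; ring
  rw [e1, e2, e3, e4]
  have hN' : 2 * ((n : ℝ) + 2) ≤ N := by exact_mod_cast hN
  have hNn : 0 ≤ (N : ℝ) - n := by
    have : (0 : ℝ) ≤ n := by positivity
    linarith
  calc fl N (n + 1) * fl N (n + 1) = (((N : ℝ) - n) * fl N n) * fl N (n + 1) := by rw [← h3]
    _ ≤ (((N : ℝ) - n) * (Real.exp (((n + 1 : ℕ) : ℝ) * n / (N - (n + 1 : ℕ) - n)) *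
          fl (N - (n + 1)) n)) * fl N (n + 1) := by
        gcongr
    _ = _ := by ring

lemma pair_num1 (n N m r : ℕ) (hr : r + 3 ≤ n) (hN : m + 2 * n ≤ N) :
    fl m (2 * r) * fl (N - m) (2 * (n - 2 - r) + 1) ≤
      (fl m r * fl (N - m) (n - 1 - r)) ^ 2 *
      (Real.exp (-(((n : ℝ) - 1 - r) * (n - 2 - r) / N)) / ((N : ℝ) - m - n + r + 2)) := by
  obtain ⟨s, rfl⟩ : ∃ a, n = a + 2 + r := ⟨n - 2 - r, by omega⟩
  rw [show s + 2 + r - 1 - r = s + 1 by omega,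
    show 2 * (s + 2 + r - 2 - r) + 1 = (s + 1) + s by omega, two_mul, fl_add, fl_add]
  have h1 : fl (m - r) r ≤ fl m r := fl_le_left (by omega) r
  have h2 := fl_ratio_up (N - m) (s + 1) s (by omega)
  have h3 := fl_succ (N - m) s
  have hp := fl_nonneg (N - m) (s + 1)
  have hp2 := fl_nonneg m r
  have hNm : ((N - m : ℕ) : ℝ) = (N : ℝ) - m := Nat.cast_sub (by omega)
  have hN' : (m : ℝ) + 2 * (s + 2 + r) ≤ N := by exact_mod_cast hN
  have hs0 : (0 : ℝ) ≤ s := by positivity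
  have hr0 : (0 : ℝ) ≤ r := by positivity
  have hm0 : (0 : ℝ) ≤ m := by positivity
  have e1 : ((s + 2 + r : ℕ) : ℝ) - 1 - r = ((s + 1 : ℕ) : ℝ) := by push_cast; ring
  have e2 : ((s + 2 + r : ℕ) : ℝ) - 2 - r = s := by push_cast; ring
  have e3 : ((N : ℝ) - m - (s + 2 + r : ℕ) + r + 2) = N - m - s := by push_cast; ring
  rw [e1, e2, e3]
  have hD : 0 < (N : ℝ) - m - s := by linarith
  have h4 : Real.exp (-(((s + 1 : ℕ) : ℝ) * s / (N - m : ℕ))) ≤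
      Real.exp (-(((s + 1 : ℕ) : ℝ) * s / N)) := by
    apply Real.exp_le_exp.2
    apply neg_le_neg
    apply div_le_div_of_nonneg_left (by positivity)
    · rw [hNm]; linarith
    · rw [hNm]; linarith
  have h5 := h2.trans (mul_le_mul_of_nonneg_right h4 (fl_nonneg _ _))
  set X := Real.exp (-(((s + 1 : ℕ) : ℝ) * s / N)) with hXdef
  have h6 : fl (N - m) s = fl (N - m) (s + 1) / ((N : ℝ) - m - s) := by
    rw [h3, hNm]; field_simp
  rw [h6] at h5
  calc fl (m - r) r * fl m r * (fl (N - m - (s + 1)) s * fl (N - m) (s + 1))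
      ≤ fl m r * fl m r * ((X * (fl (N - m) (s + 1) / ((N : ℝ) - m - s))) * fl (N - m) (s + 1)) := by
        have := fl_nonneg (N - m - (s + 1)) s
        gcongr
    _ = _ := by ring

lemma pair_num2 (n N m r : ℕ) (hr1 : 1 ≤ r) (hr : r + 3 ≤ n) (hrm : r ≤ m) :
    fl m (2 * (r - 1) + 1) * fl (N - m) (2 * (n - 2 - (r - 1))) ≤
      (fl m r * fl (N - m) (n - 1 - r)) ^ 2 * (1 / ((m : ℝ) - r + 1)) := by
  obtain ⟨q, rfl⟩ : ∃ a, r = a + 1 := ⟨r - 1, by omega⟩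
  have e0 : n - 2 - (q + 1 - 1) = n - 1 - (q + 1) := by omega
  rw [e0]
  set s := n - 1 - (q + 1)
  rw [show 2 * (q + 1 - 1) + 1 = (q + 1) + q by omega, two_mul, fl_add m (q + 1) q,
    fl_add (N - m) s s]
  have h1 : fl (m - (q + 1)) q ≤ fl m q := fl_le_left (by omega) q
  have h2 : fl (N - m - s) s ≤ fl (N - m) s := fl_le_left (by omega) s
  have h3 := fl_succ m q
  have hm : (q : ℝ) + 1 ≤ m := by exact_mod_cast hrm
  have e1 : (m : ℝ) - (q + 1 : ℕ) + 1 = m - q := by push_cast; ring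
  rw [e1]
  have hD : 0 < (m : ℝ) - q := by linarith
  have h6 : fl m q = fl m (q + 1) / ((m : ℝ) - q) := by
    rw [h3]; field_simp
  rw [h6] at h1
  have p1 := fl_nonneg m (q + 1)
  have p2 := fl_nonneg (N - m) s
  calc fl (m - (q + 1)) q * fl m (q + 1) * (fl (N - m - s) s * fl (N - m) s)
      ≤ (fl m (q + 1) / ((m : ℝ) - q)) * fl m (q + 1) * (fl (N - m) s * fl (N - m) s) := by
        have := fl_nonneg (N - m - s) s
        gcongr
    _ = _ := by ring

lemma pair_le {n : ℕ} (u v : Fin n) (huv : u ≠ v) (m r : ℕ) (hr1 : 1 ≤ r) (hr : r + 3 ≤ n)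
    (hrm : r ≤ m) (hN : m + 2 * n ≤ numEdges n) :
    Pr (fun σ : Ord n => cnt σ u 0 m = r ∧ cnt σ v 0 m = r) ≤
      pf (numEdges n) m (n - 1) r ^ 2 * rho n (numEdges n) m r := by
  refine (Pr_deg_two u v huv m r (by omega) hr1 (by omega)).trans ?_
  set N := numEdges n with hNdef
  have hden := pair_den n N (by omega) (by omega)
  have hn1 := pair_num1 n N m r hr hN
  have hn2 := pair_num2 n N m r hr1 hr hrm
  have hr' : (r : ℝ) + 3 ≤ n := by exact_mod_cast hr
  have hN' : (m : ℝ) + 2 * n ≤ N := by exact_mod_cast hN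
  have hrm' : (r : ℝ) ≤ m := by exact_mod_cast hrm
  have hr0 : (1 : ℝ) ≤ r := by exact_mod_cast hr1
  change (((n - 2).choose r : ℕ) : ℝ) ^ 2 * (fl m (2 * r) * fl (N - m) (2 * (n - 2 - r) + 1) /
      fl N (2 * (n - 2) + 1)) + (((n - 2).choose (r - 1) : ℕ) : ℝ) ^ 2 *
      (fl m (2 * (r - 1) + 1) * fl (N - m) (2 * (n - 2 - (r - 1))) / fl N (2 * (n - 2) + 1)) ≤ _
  rw [pf_eq]
  unfold rho
  have c1 : (((n - 2).choose r : ℕ) : ℝ) ≤ ((n - 1).choose r : ℕ) := by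
    exact_mod_cast Nat.choose_le_choose r (by omega)
  have c2 : (((n - 2).choose (r - 1) : ℕ) : ℝ) = ((n - 1).choose r : ℕ) * (r / ((n : ℝ) - 1)) := by
    have h := Nat.add_one_mul_choose_eq (n - 2) (r - 1)
    rw [show n - 2 + 1 = n - 1 by omega, show r - 1 + 1 = r by omega] at h
    have h' : ((n - 1 : ℕ) : ℝ) * ((n - 2).choose (r - 1) : ℕ) = ((n - 1).choose r : ℕ) * r := by
      exact_mod_cast h
    rw [Nat.cast_sub (by omega)] at h'
    have : (0 : ℝ) < (n : ℝ) - 1 := by linarith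
    push_cast at h'
    field_simp
    linarith
  set E := Real.exp (((n : ℝ) - 1) * (n - 2) / (N - 2 * n + 3)) with hE
  have e1 : Real.exp (((n : ℝ) - 1) * (n - 2) / (N - 2 * n + 3) - (n - 1 - r) * (n - 2 - r) / N) =
      E * Real.exp (-(((n : ℝ) - 1 - r) * (n - 2 - r) / N)) := by
    rw [hE, ← Real.exp_add]; congr 1
  rw [e1]
  set F := Real.exp (-(((n : ℝ) - 1 - r) * (n - 2 - r) / N)) with hF
  have hEp : 0 < E := Real.exp_pos _
  have hFp : 0 < F := Real.exp_pos _
  have hd1 : 0 < (N : ℝ) - m - n + r + 2 := by linarith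
  have hd2 : 0 < (m : ℝ) - r + 1 := by linarith
  have hd3 : 0 < (N : ℝ) - n + 2 := by linarith
  have hQ : 0 < fl N (2 * (n - 2) + 1) := fl_pos (by omega)
  have hQ1 : 0 < fl N (n - 1) := fl_pos (by omega)
  have hM := mul_nonneg (fl_nonneg m r) (fl_nonneg (N - m) (n - 1 - r))
  set M := fl m r * fl (N - m) (n - 1 - r) with hMdef
  set Q := fl N (2 * (n - 2) + 1) with hQdef
  set Q1 := fl N (n - 1) with hQ1def
  set c := (((n - 1).choose r : ℕ) : ℝ) with hc
  have hc0 : 0 ≤ c := by positivity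
  have hQinv : 1 / Q ≤ E * ((N : ℝ) - n + 2) / Q1 ^ 2 := by
    rw [div_le_div_iff₀ hQ (by positivity)]; linarith
  have t1 : (((n - 2).choose r : ℕ) : ℝ) ^ 2 * (fl m (2 * r) * fl (N - m) (2 * (n - 2 - r) + 1) / Q)
      ≤ c ^ 2 * (M ^ 2 * (F / ((N : ℝ) - m - n + r + 2)) * (E * ((N : ℝ) - n + 2) / Q1 ^ 2)) := by
    rw [div_eq_mul_one_div (fl m (2 * r) * _)]
    have := fl_nonneg m (2 * r)
    have := fl_nonneg (N - m) (2 * (n - 2 - r) + 1)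
    gcongr
  have t2 : (((n - 2).choose (r - 1) : ℕ) : ℝ) ^ 2 *
      (fl m (2 * (r - 1) + 1) * fl (N - m) (2 * (n - 2 - (r - 1))) / Q) ≤
      (c * (r / ((n : ℝ) - 1))) ^ 2 *
        (M ^ 2 * (1 / ((m : ℝ) - r + 1)) * (E * ((N : ℝ) - n + 2) / Q1 ^ 2)) := by
    rw [c2, div_eq_mul_one_div (fl m (2 * (r - 1) + 1) * _)]
    have := fl_nonneg m (2 * (r - 1) + 1)
    have := fl_nonneg (N - m) (2 * (n - 2 - (r - 1)))
    gcongr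
  refine (add_le_add t1 t2).trans (le_of_eq ?_)
  ring

/-- Second moment bound for the absence of vertices of degree exactly `r`. -/
lemma second_moment {n : ℕ} (m r : ℕ) (hr1 : 1 ≤ r) (hr : r + 3 ≤ n)
    (hrm : r ≤ m) (hN : m + 2 * n ≤ numEdges n) :
    Pr (fun σ : Ord n => ∀ v, cnt σ v 0 m ≠ r) ≤
      1 / (n * pf (numEdges n) m (n - 1) r) + (rho n (numEdges n) m r - 1) := by
  classical
  set f := pf (numEdges n) m (n - 1) r with hf
  have hfp : 0 < f := by
    rw [hf, pf_eq]
    have := fl_pos hrm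
    have := fl_pos (n := numEdges n - m) (k := n - 1 - r) (by omega)
    have := fl_pos (n := numEdges n) (k := n - 1) (by omega)
    have : (0:ℝ) < ((n - 1).choose r : ℕ) := by exact_mod_cast Nat.choose_pos (by omega)
    positivity
  have hnp : (0 : ℝ) < n := by exact_mod_cast (by omega : 0 < n)
  set ρ := rho n (numEdges n) m r with hρ
  let X : Ord n → ℝ := fun σ => ∑ v, if cnt σ v 0 m = r then (1:ℝ) else 0
  have hEX : Ex X = n * f := by
    simp only [X]
    rw [Ex_sum]
    simp_rw [← Pr_eq_Ex']
    rw [sum_congr rfl (fun v _ => Pr_deg_eq v 0 m r (by omega) (by omega))]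
    simp [hf]
  have hEX2 : Ex (fun σ => X σ ^ 2) ≤ n * f + n ^ 2 * (f ^ 2 * ρ) := by
    have h1 : ∀ σ, X σ ^ 2 = ∑ u, ∑ v, if cnt σ u 0 m = r ∧ cnt σ v 0 m = r then (1:ℝ) else 0 := by
      intro σ
      simp only [X]
      rw [sq, sum_mul_sum]
      refine sum_congr rfl fun u _ => sum_congr rfl fun v _ => ?_
      by_cases h1 : cnt σ u 0 m = r <;> by_cases h2 : cnt σ v 0 m = r <;> simp [h1, h2]
    simp_rw [h1]
    rw [Ex_sum]
    simp_rw [Ex_sum, ← Pr_eq_Ex']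
    have h2 : ∀ u v : Fin n, Pr (fun σ : Ord n => cnt σ u 0 m = r ∧ cnt σ v 0 m = r) ≤
        (if u = v then f else 0) + f ^ 2 * ρ := by
      intro u v
      have hρ0 : 0 ≤ f ^ 2 * ρ := by
        have h01 : (⟨0, by omega⟩ : Fin n) ≠ ⟨1, by omega⟩ := by simp
        exact (Pr_nonneg _).trans (pair_le _ _ h01 m r hr1 hr hrm hN)
      split_ifs with h
      · subst h
        simp only [and_self]
        rw [Pr_deg_eq u 0 m r (by omega) (by omega)]
        simp only [Nat.sub_zero]
        linarith
      · rw [zero_add]; exact pair_le u v h m r hr1 hr hrm hN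
    refine (sum_le_sum fun u _ => sum_le_sum fun v _ => h2 u v).trans (le_of_eq ?_)
    simp [sum_add_distrib]
    ring
  have hμ : 0 < (n : ℝ) * f := by positivity
  refine (markov (fun σ => (X σ - n * f) ^ 2) (fun σ => sq_nonneg _) ((n * f) ^ 2) (by positivity) _
    ?_).trans ?_
  · intro σ hσ
    have : X σ = 0 := by
      simp only [X]
      apply sum_eq_zero
      intro v _
      rw [if_neg (hσ v)]
    rw [this]; nlinarith
  · have h3 : Ex (fun σ => (X σ - n * f) ^ 2) = Ex (fun σ => X σ ^ 2) - (n * f) ^ 2 := by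
      have : (fun σ => (X σ - n * f) ^ 2) =
          fun σ => (X σ ^ 2 - (2 * (n * f)) * X σ) + (n * f) ^ 2 := by
        funext σ; ring
      rw [this, Ex_add, Ex_sub, Ex_mul_left, Ex_const, hEX]; ring
    rw [h3, div_le_iff₀ (by positivity)]
    have : (1 / (n * f) + (ρ - 1)) * (n * f) ^ 2 = n * f + n ^ 2 * (f ^ 2 * ρ) - (n * f) ^ 2 := by
      field_simp
      ring
    rw [this]
    linarith

end RGP


namespace RGP

/-! ### Parameters and asymptotics -/

/-- Iterated logarithm. -/
noncomputable def ell (n : ℕ) : ℝ := Real.log (Real.log n)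

/-- The slowly growing factor. -/
noncomputable def ww (n : ℕ) : ℕ := ⌊ell n / 16⌋₊

/-- The time at which the last phase is compared with the hitting time. -/
noncomputable def mm (k n : ℕ) : ℕ := ⌊(n : ℝ) / 2 * (Real.log n + ((k : ℝ) - 3 / 2) * ell n)⌋₊

lemma tendsto_L : Tendsto (fun n : ℕ => Real.log n) atTop atTop :=
  Real.tendsto_log_atTop.comp tendsto_natCast_atTop_atTop

lemma tendsto_ell : Tendsto ell atTop atTop :=
  Real.tendsto_log_atTop.comp tendsto_L

lemma tendsto_ww : Tendsto ww atTop atTop :=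
  tendsto_nat_floor_atTop.comp (tendsto_ell.atTop_div_const (by norm_num))

lemma ev_basic (C : ℝ) : ∀ᶠ n : ℕ in atTop, C ≤ ell n ∧ 1 ≤ ell n ∧ ell n ≤ Real.log n ∧
    C * Real.log n ^ 2 ≤ n ∧ Real.exp (ell n) = Real.log n ∧ Real.exp (Real.log n) = n ∧
    C ≤ Real.log n ∧ 1 ≤ Real.log n ∧ C ≤ n := by
  have h1 : ∀ᶠ n : ℕ in atTop, |C| * Real.log n ^ 2 ≤ n := by
    have h := (Real.isLittleO_pow_log_id_atTop (n := 2)).comp_tendsto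
      (tendsto_natCast_atTop_atTop (R := ℝ))
    have h2 := h.def (c := 1 / (|C| + 1)) (by positivity)
    filter_upwards [h2] with n hn
    simp only [Function.comp, id, Real.norm_eq_abs] at hn
    rw [abs_of_nonneg (sq_nonneg (Real.log n)), abs_of_nonneg (Nat.cast_nonneg n : (0 : ℝ) ≤ n)] at hn
    have hC := abs_nonneg C
    rw [one_div, ← div_eq_inv_mul, le_div_iff₀ (by positivity)] at hn
    nlinarith [sq_nonneg (Real.log n)]
  filter_upwards [h1, tendsto_ell.eventually_ge_atTop C, tendsto_ell.eventually_ge_atTop 1,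
    tendsto_L.eventually_ge_atTop C, tendsto_L.eventually_ge_atTop 1, eventually_gt_atTop 0,
    (tendsto_natCast_atTop_atTop (R := ℝ)).eventually_ge_atTop C]
    with n h1 h2 h3 h4 h5 h6 h7
  have hn : (0 : ℝ) < n := by exact_mod_cast h6
  have e1 : Real.exp (ell n) = Real.log n := Real.exp_log (by linarith)
  refine ⟨h2, h3, ?_, ?_, e1, Real.exp_log hn, h4, h5, h7⟩
  · have := Real.add_one_le_exp (ell n); linarith
  · have := le_abs_self C
    nlinarith [sq_nonneg (Real.log n)]

lemma numEdges_cast (n : ℕ) : (numEdges n : ℝ) = (n : ℝ) * (n - 1) / 2 := by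
  unfold numEdges
  rw [← Nat.choose_two_right, Nat.cast_choose_two]

lemma ww_le (n : ℕ) (h : 0 ≤ ell n) : (ww n : ℝ) ≤ ell n / 16 := Nat.floor_le (by positivity)

lemma mm_bounds (k n : ℕ) (hk : 2 ≤ k) (h1 : 1 ≤ ell n) (h2 : ell n ≤ Real.log n)
    (h3 : 4 ≤ Real.log n) (hn : (1 : ℝ) ≤ n) :
    (mm k n : ℝ) ≤ (n : ℝ) / 2 * (Real.log n + ((k : ℝ) - 3 / 2) * ell n) ∧
    (n : ℝ) / 2 * (Real.log n + ((k : ℝ) - 3 / 2) * ell n) ≤ mm k n + 1 ∧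
    (mm k n : ℝ) ≤ n * k * Real.log n / 2 ∧ n * Real.log n / 4 ≤ mm k n := by
  have hk' : (2 : ℝ) ≤ k := by exact_mod_cast hk
  have hp : 0 ≤ (n : ℝ) / 2 * (Real.log n + ((k : ℝ) - 3 / 2) * ell n) := by
    apply mul_nonneg (by positivity)
    have : 0 ≤ ((k : ℝ) - 3 / 2) * ell n := mul_nonneg (by linarith) (by linarith)
    linarith
  have a1 := Nat.floor_le hp
  have a2 := (Nat.lt_floor_add_one ((n : ℝ) / 2 * (Real.log n + ((k : ℝ) - 3 / 2) * ell n))).le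
  change (mm k n : ℝ) ≤ _ at a1
  change _ ≤ (mm k n : ℝ) + 1 at a2
  refine ⟨a1, a2, a1.trans ?_, ?_⟩
  · have : ((k : ℝ) - 3 / 2) * ell n ≤ (k - 1) * Real.log n := by
      apply mul_le_mul <;> linarith
    have : Real.log n + ((k : ℝ) - 3 / 2) * ell n ≤ k * Real.log n := by linarith
    nlinarith
  · have : 0 ≤ ((k : ℝ) - 3 / 2) * ell n := mul_nonneg (by linarith) (by linarith)
    nlinarith

lemma real_main (x L m r : ℝ) (hx : 1 ≤ x) (hL : 1 ≤ L) (hr : 0 ≤ r) (hm : 0 ≤ m)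
    (b3 : m ≤ x * (r + 1) * L / 2) (h4 : 100 * (r + 2) ^ 2 * L ^ 2 ≤ x) :
    (2 * m + x) * (m + x) ≤ x ^ 2 * (x - 1) / 2 := by
  have hrL : 0 ≤ r * L := by positivity
  have hkL : ((r + 1) * L + 2) ^ 2 ≤ x - 1 := by
    have h9 : ((r + 1) * L + 2) ≤ 2 * ((r + 2) * L) := by linarith
    have h10 : ((r + 1) * L + 2) ^ 2 ≤ (2 * ((r + 2) * L)) ^ 2 :=
      pow_le_pow_left₀ (by linarith) h9 2
    have h11 : 1 ≤ (r + 2) * L := by linarith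
    have h12 : 1 ≤ ((r + 2) * L) ^ 2 := one_le_pow₀ h11
    have h13 : 100 * ((r + 2) * L) ^ 2 ≤ x := by rw [mul_pow]; linarith
    have h14 : (2 * ((r + 2) * L)) ^ 2 = 4 * ((r + 2) * L) ^ 2 := by ring
    linarith
  have c1 : 2 * m + x ≤ x * ((r + 1) * L + 2) := by
    have : x * ((r + 1) * L + 2) = 2 * (x * (r + 1) * L / 2) + x + x := by ring
    linarith
  have c2 : m + x ≤ x * ((r + 1) * L + 2) / 2 := by
    have : x * ((r + 1) * L + 2) / 2 = (x * (r + 1) * L / 2) + x := by ring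
    linarith
  calc (2 * m + x) * (m + x) ≤ (x * ((r + 1) * L + 2)) * (x * ((r + 1) * L + 2) / 2) := by
        apply mul_le_mul c1 c2 (by linarith) (by linarith)
    _ = x ^ 2 * ((r + 1) * L + 2) ^ 2 / 2 := by ring
    _ ≤ _ := by
      have := mul_le_mul_of_nonneg_left hkL (sq_nonneg x)
      linarith

lemma real_main2 (x m : ℝ) (hx : 1 ≤ x) (hm : 0 < m)
    (h : (2 * m + x) * (m + x) ≤ x ^ 2 * (x - 1) / 2) : m + x < x * (x - 1) / 2 := by
  have h1 : x * (m + x) < (2 * m + x) * (m + x) :=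
    mul_lt_mul_of_pos_right (by linarith) (by linarith)
  have h2 : x * (m + x) < x * (x * (x - 1) / 2) := by
    have : x * (x * (x - 1) / 2) = x ^ 2 * (x - 1) / 2 := by ring
    linarith
  exact lt_of_mul_lt_mul_left h2 (by linarith)

lemma real_main3 (x m N : ℝ) (hx : 1 ≤ x) (hm : 0 ≤ m) (hN : N = x * (x - 1) / 2)
    (hD : 0 < N - m - (x - 1))
    (h : (2 * m + x) * (m + x) ≤ x ^ 2 * (x - 1) / 2) :
    m * (x - 1) / (N - m - (x - 1)) ≤ 2 * m / x + 1 := by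
  rw [div_le_iff₀ hD, hN]
  have h1 : (2 * m / x + 1) * (x * (x - 1) / 2 - m - (x - 1)) =
    m * (x - 1) + (x ^ 2 * (x - 1) / 2 - (2 * m + x) * (m + x - 1)) / x := by
    field_simp
    ring
  rw [h1]
  have : 0 ≤ (x ^ 2 * (x - 1) / 2 - (2 * m + x) * (m + x - 1)) / x := by
    apply div_nonneg _ (by linarith)
    nlinarith
  linarith

set_option maxHeartbeats 1000000 in
/-- Expected number of vertices of degree `k - 1` at time `mm` is large. -/
lemma np_ge (k : ℕ) (hk : 2 ≤ k) : ∃ c : ℝ, 0 < c ∧ ∀ᶠ n : ℕ in atTop,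
    c * Real.exp (ell n / 2) ≤ n * pf (numEdges n) (mm k n) (n - 1) (k - 1) := by
  obtain ⟨r, rfl⟩ : ∃ r, k = r + 1 := ⟨k - 1, by omega⟩
  refine ⟨1 / (r.factorial : ℝ) * (1 / 8) ^ r * Real.exp (-1), by positivity, ?_⟩
  have hk' : (2 : ℝ) ≤ (r : ℝ) + 1 := by exact_mod_cast hk
  filter_upwards [ev_basic (100 * ((r : ℝ) + 2) ^ 2), eventually_gt_atTop 0] with n hn hn0
  obtain ⟨h1, h2, h3, h4, h5, h6, h7, h8, h9⟩ := hn
  have hn1 : (1 : ℝ) ≤ n := by exact_mod_cast hn0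
  have hr0 : (0 : ℝ) ≤ r := by positivity
  have hL : 4 ≤ Real.log n := by nlinarith
  obtain ⟨b1, b2, b3, b4⟩ := mm_bounds (r + 1) n hk h2 h3 hL hn1
  rw [Nat.add_sub_cancel]
  set m := mm (r + 1) n with hm
  set x : ℝ := (n : ℝ) with hx
  set L := Real.log x with hLdef
  set ℓ := ell n with hℓ
  push_cast at b1 b2 b3
  have hN := numEdges_cast n
  rw [← hx] at hN
  have hrx : 100 * ((r : ℝ) + 2) ≤ x := by nlinarith
  have hrm : 2 * (r : ℝ) ≤ m := by nlinarith
  have hm0 : (0 : ℝ) ≤ m := by positivity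
  have hmpos : (0 : ℝ) < m := by
    have : 0 < x * L / 4 := by positivity
    linarith
  have hmain := real_main x L m r hn1 h8 hr0 hm0 b3 h4
  have hNm : (m : ℝ) + x < numEdges n := by
    rw [hN]
    exact real_main2 x m hn1 hmpos hmain
  have hNm' : m + n < numEdges n := by rw [hx] at hNm; exact_mod_cast hNm
  have hrm' : 2 * r ≤ m := by exact_mod_cast hrm
  have hrx' : 100 * (r + 2) ≤ n := by rw [hx] at hrx; exact_mod_cast hrx
  have key := pf_ge (numEdges n) m (n - 1) r (by omega) (by omega) (by omega)
  rw [Nat.cast_sub (by omega), ← hx, Nat.cast_one] at key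
  have hD : 0 < (numEdges n : ℝ) - m - (x - 1) := by linarith
  have e1 : (m : ℝ) * (x - 1) / (numEdges n - m - (x - 1)) ≤ L + (r - 1 / 2) * ℓ + 1 := by
    have e2 := real_main3 x m (numEdges n) hn1 hm0 hN hD hmain
    have e3 : 2 * (m : ℝ) / x ≤ L + (r - 1 / 2) * ℓ := by
      rw [div_le_iff₀ (by linarith)]
      nlinarith
    linarith
  have e2 : Real.exp (-(L + (r - 1 / 2) * ℓ + 1)) ≤
      Real.exp (-((m : ℝ) * (x - 1) / (numEdges n - m - (x - 1)))) := by
    apply Real.exp_le_exp.2; linarith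
  have e3 : L / 8 ≤ (x - 1 + 1 - r) * (m - r) / numEdges n := by
    rw [hN, le_div_iff₀ (by nlinarith)]
    have c1 : x / 2 ≤ x - 1 + 1 - r := by linarith
    have c2 : (m : ℝ) / 2 ≤ m - r := by linarith
    have c3 : x / 2 * (m / 2) ≤ (x - 1 + 1 - r) * (m - r) := by
      apply mul_le_mul c1 c2 (by positivity) (by linarith)
    have c4 : x / 2 * (x * L / 4 / 2) ≤ x / 2 * (m / 2) := by
      apply mul_le_mul_of_nonneg_left _ (by positivity); linarith
    nlinarith
  have e4 : (L / 8) ^ r ≤ ((x - 1 + 1 - r) * (m - r) / numEdges n) ^ r :=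
    pow_le_pow_left₀ (by positivity) e3 r
  have e5 : 1 / (r.factorial : ℝ) * (L / 8) ^ r * Real.exp (-(L + (r - 1 / 2) * ℓ + 1)) ≤
      pf (numEdges n) m (n - 1) r := by
    refine le_trans ?_ key
    have hpw : (0 : ℝ) ≤ (L / 8) ^ r := by positivity
    exact mul_le_mul (mul_le_mul_of_nonneg_left e4 (by positivity)) e2 (Real.exp_pos _).le
      (mul_nonneg (by positivity) (hpw.trans e4))
  have e6 : x * (1 / (r.factorial : ℝ) * (L / 8) ^ r * Real.exp (-(L + (r - 1 / 2) * ℓ + 1))) =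
      1 / (r.factorial : ℝ) * (1 / 8) ^ r * Real.exp (-1) * Real.exp (ℓ / 2) := by
    have : x * L ^ r * Real.exp (-(L + (r - 1 / 2) * ℓ + 1)) = Real.exp (-1) * Real.exp (ℓ / 2) := by
      rw [← h5, ← Real.exp_nat_mul, ← Real.exp_add]
      nth_rw 1 [← h6]
      rw [← Real.exp_add, ← Real.exp_add, h5]
      congr 1; ring
    calc _ = 1 / (r.factorial : ℝ) * (1 / 8) ^ r *
          (x * L ^ r * Real.exp (-(L + (r - 1 / 2) * ℓ + 1))) := by
          rw [div_pow, one_div_pow]; ring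
      _ = _ := by rw [this]; ring
  rw [← e6]
  exact mul_le_mul_of_nonneg_left e5 (by linarith)

end RGP


namespace RGP

/-! ### The two degree events -/

lemma tendsto_const_div_sub (a c : ℝ) :
    Tendsto (fun n : ℕ => a / ((n : ℝ) - c)) atTop (nhds 0) := by
  apply Tendsto.div_atTop tendsto_const_nhds
  simpa [sub_eq_add_neg] using
    tendsto_atTop_add_const_right atTop (-c) (tendsto_natCast_atTop_atTop (R := ℝ))

lemma expE_tendsto :
    Tendsto (fun n : ℕ => ((n : ℝ) - 1) * (n - 2) / (numEdges n - 2 * n + 3)) atTop (nhds 2) := by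
  have h : Tendsto (fun n : ℕ => 2 + 4 / ((n : ℝ) - 3)) atTop (nhds (2 + 0)) :=
    tendsto_const_nhds.add (tendsto_const_div_sub 4 3)
  rw [add_zero] at h
  refine h.congr' ?_
  filter_upwards [eventually_ge_atTop 4] with n hn
  have hn' : (4 : ℝ) ≤ n := by exact_mod_cast hn
  rw [numEdges_cast]
  have e : (n : ℝ) * (n - 1) / 2 - 2 * n + 3 = (n - 2) * (n - 3) / 2 := by ring
  rw [e]
  have h2 : (n : ℝ) - 2 ≠ 0 := by linarith
  have h3 : (n : ℝ) - 3 ≠ 0 := by linarith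
  field_simp
  ring

lemma expF_tendsto (r : ℝ) :
    Tendsto (fun n : ℕ => ((n : ℝ) - 1 - r) * (n - 2 - r) / numEdges n) atTop (nhds 2) := by
  have h : Tendsto (fun n : ℕ => 2 * ((1 - r / ((n : ℝ) - 1)) * (1 - (2 + r) / ((n : ℝ) - 0))))
      atTop (nhds (2 * ((1 - 0) * (1 - 0)))) :=
    ((tendsto_const_nhds.sub (tendsto_const_div_sub r 1)).mul
      (tendsto_const_nhds.sub (tendsto_const_div_sub (2 + r) 0))).const_mul 2
  norm_num at h
  refine h.congr' ?_
  filter_upwards [eventually_ge_atTop 4] with n hn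
  have hn' : (4 : ℝ) ≤ n := by exact_mod_cast hn
  rw [numEdges_cast]
  have h2 : (n : ℝ) - 1 ≠ 0 := by linarith
  have h3 : (n : ℝ) ≠ 0 := by linarith
  field_simp
  ring

lemma inv_L_tendsto (C : ℝ) : Tendsto (fun n : ℕ => C / Real.log n) atTop (nhds 0) :=
  tendsto_const_nhds.div_atTop tendsto_L

set_option maxHeartbeats 2000000 in
lemma rho_tendsto (k : ℕ) (hk : 2 ≤ k) :
    Tendsto (fun n : ℕ => rho n (numEdges n) (mm k n) (k - 1 : ℕ)) atTop (nhds 1) := by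
  set r : ℝ := ((k - 1 : ℕ) : ℝ) with hr
  have hrk : r = (k : ℝ) - 1 := by rw [hr, Nat.cast_sub (by omega)]; simp
  have hk' : (2 : ℝ) ≤ k := by exact_mod_cast hk
  have hA := expE_tendsto
  have hB : Tendsto (fun n : ℕ => ((numEdges n : ℝ) - n + 2) / (numEdges n - mm k n - n + r + 2))
      atTop (nhds 1) := by
    have h0 : Tendsto (fun n : ℕ => ((mm k n : ℝ) - r) / (numEdges n - mm k n - n + r + 2))
        atTop (nhds 0) := by
      refine squeeze_zero' (g := fun n : ℕ => 2 * k / Real.log n) ?_ ?_ (inv_L_tendsto _)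
      all_goals
        filter_upwards [ev_basic (100 * (k : ℝ)), eventually_gt_atTop 0] with n hn hn0
        obtain ⟨h1, h2, h3, h4, h5, h6, h7, h8, h9⟩ := hn
        have hn1 : (1 : ℝ) ≤ n := by exact_mod_cast hn0
        have hL : 4 ≤ Real.log n := by linarith
        obtain ⟨b1, b2, b3, b4⟩ := mm_bounds k n hk h2 h3 hL hn1
        set L := Real.log n
        set x : ℝ := (n : ℝ)
        have hx : 200 ≤ x := by linarith
        have hkL : 100 * (k * L) ≤ x := by nlinarith
        have hmr : r ≤ mm k n := by nlinarith
        have hden : x ^ 2 / 4 ≤ numEdges n - mm k n - x + r + 2 := by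
          rw [numEdges_cast]
          change x ^ 2 / 4 ≤ x * (x - 1) / 2 - mm k n - x + r + 2
          nlinarith
      · apply div_nonneg
        · linarith
        · nlinarith
      · have : ((mm k n : ℝ) - r) ≤ x * k * L / 2 := by linarith
        calc ((mm k n : ℝ) - r) / (numEdges n - mm k n - x + r + 2)
            ≤ (x * k * L / 2) / (x ^ 2 / 4) := by
              apply div_le_div₀ (by positivity) this (by positivity) hden
          _ = 2 * k * L / x := by field_simp; norm_num
          _ ≤ 2 * k / L := by
              rw [div_le_div_iff₀ (by linarith) (by linarith)]
              have : L ^ 2 ≤ x := by nlinarith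
              nlinarith
    have h1 := h0.const_add 1
    rw [add_zero] at h1
    refine h1.congr' ?_
    filter_upwards [ev_basic (100 * (k : ℝ)), eventually_gt_atTop 0] with n hn hn0
    obtain ⟨h1, h2, h3, h4, h5, h6, h7, h8, h9⟩ := hn
    have hn1 : (1 : ℝ) ≤ n := by exact_mod_cast hn0
    have hL : 4 ≤ Real.log n := by linarith
    obtain ⟨b1, b2, b3, b4⟩ := mm_bounds k n hk h2 h3 hL hn1
    have hkL : 100 * (k * Real.log n) ≤ n := by nlinarith
    have hden : (0 : ℝ) < numEdges n - mm k n - n + r + 2 := by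
      rw [numEdges_cast]
      nlinarith
    field_simp
    ring
  have hC : Tendsto (fun n : ℕ => (r / ((n : ℝ) - 1)) ^ 2 * (((numEdges n : ℝ) - n + 2) *
      Real.exp (((n : ℝ) - 1) * (n - 2) / (numEdges n - 2 * n + 3)) / (mm k n - r + 1)))
      atTop (nhds 0) := by
    have hg : Tendsto (fun n : ℕ => r ^ 2 / Real.log n *
        Real.exp (((n : ℝ) - 1) * (n - 2) / (numEdges n - 2 * n + 3))) atTop (nhds 0) := by
      have := (inv_L_tendsto (r ^ 2)).mul (Real.continuous_exp.continuousAt.tendsto.comp hA)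
      simpa using this
    refine squeeze_zero' ?_ ?_ hg
    all_goals
      filter_upwards [ev_basic (100 * (k : ℝ)), eventually_gt_atTop 0] with n hn hn0
      obtain ⟨h1, h2, h3, h4, h5, h6, h7, h8, h9⟩ := hn
      have hn1 : (1 : ℝ) ≤ n := by exact_mod_cast hn0
      have hL : 4 ≤ Real.log n := by linarith
      obtain ⟨b1, b2, b3, b4⟩ := mm_bounds k n hk h2 h3 hL hn1
      have hmL : Real.log n ≤ mm k n - r + 1 := by nlinarith
      have hN0 : 0 ≤ (numEdges n : ℝ) - n + 2 := by rw [numEdges_cast]; nlinarith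
      have hN1 : (numEdges n : ℝ) - n + 2 ≤ ((n : ℝ) - 1) ^ 2 := by rw [numEdges_cast]; nlinarith
      set E := Real.exp (((n : ℝ) - 1) * (n - 2) / (numEdges n - 2 * n + 3))
      have hE : 0 < E := Real.exp_pos _
    · apply mul_nonneg (sq_nonneg _)
      apply div_nonneg (mul_nonneg hN0 hE.le)
      linarith
    · have hx1 : 0 < (n : ℝ) - 1 := by linarith
      calc (r / ((n : ℝ) - 1)) ^ 2 * (((numEdges n : ℝ) - n + 2) * E / (mm k n - r + 1))
          ≤ (r / ((n : ℝ) - 1)) ^ 2 * (((n : ℝ) - 1) ^ 2 * E / Real.log n) := by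
            apply mul_le_mul_of_nonneg_left _ (sq_nonneg _)
            apply div_le_div₀ (by positivity) _ (by linarith) hmL
            exact mul_le_mul_of_nonneg_right hN1 hE.le
        _ = _ := by field_simp
  have hexp := Real.continuous_exp.continuousAt.tendsto.comp (hA.sub (expF_tendsto r))
  have := (hexp.mul hB).add hC
  simp only [sub_self, Real.exp_zero, mul_one, add_zero] at this
  exact this

/-- With high probability some vertex has degree exactly `k - 1` at time `mm k n`. -/
lemma E1_tendsto (k : ℕ) (hk : 2 ≤ k) :
    Tendsto (fun n : ℕ => Pr (fun σ : Ord n => ∀ v, cnt σ v 0 (mm k n) ≠ k - 1)) atTop (nhds 0) := by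
  obtain ⟨c, hc, hnp⟩ := np_ge k hk
  have hk' : (2 : ℝ) ≤ k := by exact_mod_cast hk
  have h1 : Tendsto (fun n : ℕ => 1 / (c * Real.exp (ell n / 2)) +
      (rho n (numEdges n) (mm k n) (k - 1 : ℕ) - 1)) atTop (nhds (0 + (1 - 1))) := by
    apply Tendsto.add _ ((rho_tendsto k hk).sub_const 1)
    apply tendsto_const_nhds.div_atTop
    exact (Real.tendsto_exp_atTop.comp (tendsto_ell.atTop_div_const (by norm_num))).const_mul_atTop hc
  rw [sub_self, add_zero] at h1
  refine squeeze_zero' (Eventually.of_forall fun n => Pr_nonneg _) ?_ h1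
  filter_upwards [hnp, ev_basic (100 * (k : ℝ)), eventually_ge_atTop (k + 2)] with n hnp hn hn0
  obtain ⟨h1, h2, h3, h4, h5, h6, h7, h8, h9⟩ := hn
  have hn1 : (1 : ℝ) ≤ n := by exact_mod_cast (by omega : 1 ≤ n)
  have hL : 4 ≤ Real.log n := by linarith
  obtain ⟨b1, b2, b3, b4⟩ := mm_bounds k n hk h2 h3 hL hn1
  have hkL : 100 * (k * Real.log n) ≤ n := by nlinarith
  have hkm : k ≤ mm k n := by
    have : (k : ℝ) ≤ mm k n := by nlinarith
    exact_mod_cast this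
  have hmN : mm k n + 2 * n ≤ numEdges n := by
    have : (mm k n : ℝ) + 2 * n ≤ numEdges n := by
      rw [numEdges_cast]; nlinarith
    exact_mod_cast this
  refine (second_moment (mm k n) (k - 1) (by omega) (by omega) (by omega) hmN).trans ?_
  have : 1 / ((n : ℝ) * pf (numEdges n) (mm k n) (n - 1) (k - 1)) ≤ 1 / (c * Real.exp (ell n / 2)) :=
    one_div_le_one_div_of_le (by positivity) hnp
  linarith

end RGP


namespace RGP

/-! ### Late degrees -/

lemma E2_exponent (x L l p m w k j N : ℝ) (hx : 200 ≤ x) (hN : N = x * (x - 1) / 2)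
    (hk : 2 ≤ k) (hj0 : 0 ≤ j) (hjk : j ≤ k) (hp : p = m - 2 * (x * w)) (hp0 : 0 ≤ p)
    (b2 : x / 2 * (L + (k - 3 / 2) * l) ≤ m + 1) (hw : w ≤ l / 16)
    (hkp : k * p ≤ N) (hkx : k * x ≤ N) :
    -((p - j) * (x - 1 - j) / N) ≤ 3 - (L + (k - 7 / 4) * l) := by
  have hNpos : 0 < N := by rw [hN]; nlinarith
  have h1 : 2 * p / x - 2 ≤ (p - j) * (x - 1 - j) / N := by
    rw [le_div_iff₀ hNpos]
    have e : 2 * p / x * N = p * (x - 1) := by rw [hN]; field_simp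
    have e2 : (2 * p / x - 2) * N = p * (x - 1) - 2 * N := by rw [sub_mul, e]
    rw [e2]
    have a1 : j * p ≤ k * p := mul_le_mul_of_nonneg_right hjk hp0
    have a2 : j * (x - 1) ≤ k * x := by
      apply mul_le_mul hjk (by linarith) (by linarith) (by linarith)
    nlinarith [mul_nonneg hj0 hj0]
  have h2 : L + (k - 7 / 4) * l - 1 ≤ 2 * p / x := by
    rw [le_div_iff₀ (by linarith)]
    have : x * w ≤ x * (l / 16) := mul_le_mul_of_nonneg_left hw (by linarith)
    rw [hp]
    nlinarith
  linarith

set_option maxHeartbeats 2000000 in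
lemma E2_tendsto (k : ℕ) (hk : 2 ≤ k) :
    Tendsto (fun n : ℕ => Pr (fun σ : Ord n =>
      ¬ ∀ v, k ≤ cnt σ v (2 * (n * ww n)) (mm k n) + 1)) atTop (nhds 0) := by
  have hk' : (2 : ℝ) ≤ k := by exact_mod_cast hk
  have hlim : Tendsto (fun n : ℕ => (k : ℝ) * ((k : ℝ) ^ k * Real.exp 3 * Real.exp (-(ell n / 4))))
      atTop (nhds 0) := by
    have h : Tendsto (fun n : ℕ => Real.exp (-(ell n / 4))) atTop (nhds 0) :=
      Real.tendsto_exp_neg_atTop_nhds_zero.comp (tendsto_ell.atTop_div_const (by norm_num))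
    simpa using (h.const_mul ((k : ℝ) ^ k * Real.exp 3)).const_mul (k : ℝ)
  refine squeeze_zero' (Eventually.of_forall fun n => Pr_nonneg _) ?_ hlim
  filter_upwards [ev_basic (100 * (k : ℝ) ^ 2), eventually_ge_atTop (k + 2)] with n hn hn0
  obtain ⟨h1, h2, h3, h4, h5, h6, h7, h8, h9⟩ := hn
  have hn1 : (1 : ℝ) ≤ n := by exact_mod_cast (by omega : 1 ≤ n)
  have hk2 : 2 * (k : ℝ) ≤ k ^ 2 := by nlinarith
  have hL : 4 ≤ Real.log n := by linarith
  obtain ⟨b1, b2, b3, b4⟩ := mm_bounds k n hk h2 h3 hL hn1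
  have hw := ww_le n (by linarith)
  set m := mm k n with hm
  set M := 2 * (n * ww n) with hM
  have hMr : (M : ℝ) = 2 * ((n : ℝ) * ww n) := by rw [hM]; push_cast; ring
  have hnw : (n : ℝ) * ww n ≤ n * (Real.log n / 16) :=
    mul_le_mul_of_nonneg_left (by linarith) (by linarith)
  have hkkL : 100 * (k ^ 2 * Real.log n) ≤ n := by
    have : (k : ℝ) ^ 2 * Real.log n ≤ k ^ 2 * Real.log n ^ 2 := by
      apply mul_le_mul_of_nonneg_left _ (by positivity)
      nlinarith
    linarith
  have hnL : (n : ℝ) * 4 ≤ n * Real.log n := mul_le_mul_of_nonneg_left hL (by linarith)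
  have hMm : M + k ≤ m := by
    have : (M : ℝ) + k ≤ m := by
      rw [hMr]
      have : (k : ℝ) ≤ n / 2 := by linarith
      linarith
    exact_mod_cast this
  have hkm : (k : ℝ) * m ≤ numEdges n := by
    rw [numEdges_cast]
    have : (k : ℝ) * m ≤ n * (k ^ 2 * Real.log n) / 2 := by nlinarith
    nlinarith
  have hkx : (k : ℝ) * n ≤ numEdges n := by
    rw [numEdges_cast]
    nlinarith
  have hmN2 : 2 * m ≤ numEdges n := by
    have : 2 * (m : ℝ) ≤ numEdges n := by
      have : 2 * (m : ℝ) ≤ k * m := mul_le_mul_of_nonneg_right hk' (by positivity)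
      linarith
    exact_mod_cast this
  have hxN2 : 2 * n ≤ numEdges n := by
    have : 2 * (n : ℝ) ≤ numEdges n := by
      have : 2 * (n : ℝ) ≤ k * n := mul_le_mul_of_nonneg_right hk' (by positivity)
      linarith
    exact_mod_cast this
  set p := m - M with hp
  have hpr : (p : ℝ) = m - 2 * ((n : ℝ) * ww n) := by rw [hp, Nat.cast_sub (by omega), hMr]
  have hpm : (p : ℝ) ≤ m := by exact_mod_cast Nat.sub_le m M
  have hbd : ∀ j ∈ range (k - 1), pf (numEdges n) p (n - 1) j ≤
      (k : ℝ) ^ k * Real.exp 3 * Real.exp (-(ell n / 4)) / n := by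
    intro j hj
    rw [Finset.mem_range] at hj
    refine (pf_le (numEdges n) p (n - 1) j (by omega) (by omega) (by omega) (by omega)
      (by omega)).trans ?_
    rw [Nat.cast_sub (by omega), Nat.cast_one]
    have hx200 : (200 : ℝ) ≤ n := by linarith
    have f1 := E2_exponent n (Real.log n) (ell n) p m (ww n) k j (numEdges n) hx200
      (numEdges_cast n) hk' (by positivity) (by exact_mod_cast (by omega : j ≤ k)) hpr
      (by positivity) b2 hw
      ((mul_le_mul_of_nonneg_left hpm (by positivity)).trans hkm) hkx
    have f2 : ((n : ℝ) - 1) * p / numEdges n ≤ k * Real.log n := by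
      rw [numEdges_cast]
      have : ((n : ℝ) - 1) * p / (n * (n - 1) / 2) = 2 * p / n := by
        have : (n : ℝ) - 1 ≠ 0 := by linarith
        field_simp
      rw [this, div_le_iff₀ (by linarith)]
      linarith
    have f0 : 0 ≤ ((n : ℝ) - 1) * p / numEdges n := by
      apply div_nonneg (mul_nonneg (by linarith) (by positivity)) (by positivity)
    have f3 : (((n : ℝ) - 1) * p / numEdges n) ^ j ≤ (k : ℝ) ^ k * Real.log n ^ (k - 2) := by
      calc (((n : ℝ) - 1) * p / numEdges n) ^ j ≤ (k * Real.log n) ^ j :=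
            pow_le_pow_left₀ f0 f2 j
        _ ≤ (k * Real.log n) ^ (k - 2) := by
            apply pow_le_pow_right₀ _ (by omega)
            nlinarith
        _ = (k : ℝ) ^ (k - 2) * Real.log n ^ (k - 2) := mul_pow _ _ _
        _ ≤ _ := by
            apply mul_le_mul_of_nonneg_right _ (by positivity)
            exact pow_le_pow_right₀ (by linarith) (by omega)
    have f4 := Real.exp_le_exp.2 f1
    have f5 := mul_le_mul f3 f4 (Real.exp_pos _).le (by positivity)
    refine f5.trans (le_of_eq ?_)
    rw [eq_div_iff (by linarith)]
    have g : Real.log n ^ (k - 2) * Real.exp (3 - (Real.log n + (k - 7 / 4) * ell n)) * n =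
        Real.exp 3 * Real.exp (-(ell n / 4)) := by
      rw [← h5, ← Real.exp_nat_mul, ← Real.exp_add]
      nth_rw 1 [← h6]
      rw [← Real.exp_add, ← Real.exp_add, h5, Nat.cast_sub hk]
      congr 1; push_cast; ring
    linear_combination (k : ℝ) ^ k * g
  have hU : Pr (fun σ : Ord n => ¬ ∀ v, k ≤ cnt σ v M m + 1) ≤
      ∑ vj ∈ (univ : Finset (Fin n)) ×ˢ range (k - 1), Pr (fun σ : Ord n => cnt σ vj.1 M m = vj.2) := by
    refine (Pr_mono ?_).trans (Pr_exists_le _ _)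
    intro σ h
    push Not at h
    obtain ⟨v, hv⟩ := h
    exact ⟨(v, cnt σ v M m), by simp; omega, rfl⟩
  refine hU.trans ?_
  rw [sum_product]
  have hV : ∀ v : Fin n, ∑ j ∈ range (k - 1), Pr (fun σ : Ord n => cnt σ v M m = j) ≤
      k * ((k : ℝ) ^ k * Real.exp 3 * Real.exp (-(ell n / 4)) / n) := by
    intro v
    have : ∀ j ∈ range (k - 1), Pr (fun σ : Ord n => cnt σ v M m = j) ≤
        (k : ℝ) ^ k * Real.exp 3 * Real.exp (-(ell n / 4)) / n := by
      intro j hj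
      rw [Pr_deg_eq v M m j (by omega) (by rw [Finset.mem_range] at hj; omega)]
      exact hbd j hj
    refine (sum_le_card_nsmul _ _ _ this).trans ?_
    rw [card_range, nsmul_eq_mul]
    apply mul_le_mul_of_nonneg_right _ (by positivity)
    exact_mod_cast Nat.sub_le k 1
  refine (sum_le_card_nsmul _ _ _ (fun v _ => hV v)).trans (le_of_eq ?_)
  rw [card_univ, Fintype.card_fin, nsmul_eq_mul]
  field_simp

end RGP

namespace RGP

lemma ww_size : ∀ᶠ n : ℕ in atTop, 2 * (n * ww n) ≤ numEdges n ∧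
    2 * ((n : ℝ) * ww n) ≤ n * Real.log n / 8 := by
  filter_upwards [ev_basic 100] with n hn
  obtain ⟨h1, h2, h3, h4, h5, h6, h7, h8, h9⟩ := hn
  have hw := ww_le n (by linarith)
  have hb : 2 * ((n : ℝ) * ww n) ≤ n * Real.log n / 8 := by
    have : (ww n : ℝ) ≤ Real.log n / 16 := by linarith
    have := mul_le_mul_of_nonneg_left this (Nat.cast_nonneg n)
    linarith
  refine ⟨?_, hb⟩
  have : 2 * ((n : ℝ) * ww n) ≤ numEdges n := by
    rw [numEdges_cast]
    have : Real.log n ≤ n / 100 := by nlinarith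
    nlinarith
  exact_mod_cast this

lemma deficient_tendsto (R : (n : ℕ) → Rule n) (t : ℕ) (s : ℕ → ℕ)
    (hs : ∀ n, s n ≤ n * ww n) (ε : ℝ) (hε : 0 < ε)
    (hR : ∀ n i B e, s n ≤ i → i < s n + n * ww n → (∀ v ∈ e, deg B v < t) → R n i B e) :
    Tendsto (fun n : ℕ => Pr (fun σ : Ord n =>
      ⌈ε * n⌉₊ ≤ (dset t (deg (run (R n) σ (s n + n * ww n)))).card)) atTop (nhds 0) := by
  have h0 : Tendsto (fun n : ℕ => (t : ℝ) / ((ww n : ℝ) * (ε ^ 2 / 4))) atTop (nhds 0) := by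
    apply tendsto_const_nhds.div_atTop
    exact (tendsto_natCast_atTop_atTop.comp tendsto_ww).atTop_mul_const (by positivity)
  refine squeeze_zero' (Eventually.of_forall fun n => Pr_nonneg _) ?_ h0
  filter_upwards [ww_size, ev_basic ((4 * ε + 1) / ε ^ 2 + 100),
    tendsto_ww.eventually_ge_atTop 1] with n hw hn hw1
  obtain ⟨h1, h2, h3, h4, h5, h6, h7, h8, h9⟩ := hn
  obtain ⟨hwN, hwL⟩ := hw
  have hC : 0 ≤ (4 * ε + 1) / ε ^ 2 := by positivity
  have hn100 : (100 : ℝ) ≤ n := by linarith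
  have hsn := hs n
  have hε2 : (4 * ε + 1) * Real.log n ^ 2 ≤ ε ^ 2 * n := by
    have : ((4 * ε + 1) / ε ^ 2) * Real.log n ^ 2 ≤ n := by nlinarith [sq_nonneg (Real.log n)]
    calc (4 * ε + 1) * Real.log n ^ 2 = ε ^ 2 * (((4 * ε + 1) / ε ^ 2) * Real.log n ^ 2) := by
          field_simp
      _ ≤ _ := mul_le_mul_of_nonneg_left this (by positivity)
  have hε3 : 4 * ε + Real.log n ≤ ε ^ 2 * n := by
    have g1 : Real.log n ≤ Real.log n ^ 2 := by nlinarith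
    have g2 : 4 * ε * 1 ≤ 4 * ε * Real.log n ^ 2 :=
      mul_le_mul_of_nonneg_left (by linarith) (by positivity)
    linarith
  have key := few_deficient (R n) t (s n) (n * ww n) ⌈ε * n⌉₊ (by omega) (ε ^ 2 / 4) ?_
    (by positivity) (hR n)
  · have hww : (0 : ℝ) < ww n := by exact_mod_cast hw1
    rw [le_div_iff₀ (by positivity)]
    push_cast at key
    have hn0 : (0 : ℝ) < n := by linarith
    refine le_of_mul_le_mul_left ?_ hn0
    linarith
  · have c1 : ((s n + n * ww n : ℕ) : ℝ) ≤ n * Real.log n / 8 := by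
      refine le_trans ?_ hwL
      exact_mod_cast (by omega : s n + n * ww n ≤ 2 * (n * ww n))
    rw [numEdges_cast, Nat.cast_choose_two]
    have hq := Nat.le_ceil (ε * n)
    set q : ℝ := (⌈ε * n⌉₊ : ℝ)
    have hen : 4 ≤ ε * n := by
      by_contra hc
      push Not at hc
      nlinarith
    have : ε * n * (ε * n - 1) ≤ q * (q - 1) := by nlinarith
    nlinarith

lemma exc_tendsto (k : ℕ) (hk : 2 ≤ k) (δ : ℝ) (hδ : 0 < δ) :
    Tendsto (fun n : ℕ => Pr (fun σ : Ord n => (2 / 2 ^ k + δ) * n ≤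
      exc k (deg (run (theRule n k (n * ww n) (2 * (n * ww n))) σ (n * ww n))))) atTop (nhds 0) := by
  refine squeeze_zero' (Eventually.of_forall fun n => Pr_nonneg _) ?_
    (inv_L_tendsto (16 * (2 ^ k) ^ 2 / δ ^ 2))
  filter_upwards [ww_size, ev_basic 100] with n hw hn
  obtain ⟨h1, h2, h3, h4, h5, h6, h7, h8, h9⟩ := hn
  obtain ⟨hwN, hwL⟩ := hw
  have hn0 : (0 : ℝ) < n := by linarith
  have hn2 : 2 ≤ n := by
    have : (2 : ℝ) ≤ n := by linarith
    exact_mod_cast this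
  refine (phase1_exc hn2 (by omega) (by omega) δ hδ).trans ?_
  have hL : 0 < Real.log n := by linarith
  have e : ((n * ww n : ℕ) : ℝ) * (4 * 2 ^ k * n) ^ 2 / (δ * (n : ℝ) ^ 2) ^ 2 =
      16 * (2 ^ k) ^ 2 / δ ^ 2 * (ww n / n) := by
    push_cast
    field_simp
    ring
  rw [e, div_eq_mul_inv _ (Real.log n)]
  apply mul_le_mul_of_nonneg_left _ (by positivity)
  rw [div_le_iff₀ hn0, inv_mul_eq_div, le_div_iff₀ hL]
  have := ww_le n (by linarith)
  nlinarith

lemma cnt_mono {n : ℕ} (σ : Ord n) (v : Fin n) {a b : ℕ} (h : a ≤ b) : cnt σ v 0 a ≤ cnt σ v 0 b := by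
  unfold cnt
  apply card_le_card
  intro j hj
  simp only [Finset.mem_filter] at hj ⊢
  exact ⟨hj.1, hj.2.1, by omega, hj.2.2.2⟩

lemma tau_spec {n k : ℕ} (hn : k + 1 ≤ n) (σ : Ord n) : ∀ v, k ≤ deg (procEdges σ (tau k σ)) v := by
  have : (tau k σ) ∈ {m | ∀ v : Fin n, k ≤ deg (procEdges σ m) v} := by
    apply Nat.sInf_mem
    refine ⟨numEdges n, fun v => ?_⟩
    rw [deg_procEdges, cnt_eq, Finset.filter_true_of_mem, card_star]
    · omega
    · intro e _
      simp [Pos]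
  exact this

lemma tau_ge {n k : ℕ} (hn : k + 1 ≤ n) (hk : 1 ≤ k) (σ : Ord n) (m : ℕ) (v : Fin n)
    (h : cnt σ v 0 m = k - 1) : m ≤ tau k σ := by
  by_contra hc
  push Not at hc
  have h1 := tau_spec hn σ v
  rw [deg_procEdges] at h1
  have := cnt_mono σ v hc.le
  omega

lemma M2_le_mm (k : ℕ) (hk : 2 ≤ k) : ∀ᶠ n : ℕ in atTop, 2 * (n * ww n) ≤ mm k n := by
  filter_upwards [ww_size, ev_basic 100] with n hw hn
  obtain ⟨h1, h2, h3, h4, h5, h6, h7, h8, h9⟩ := hn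
  obtain ⟨b1, b2, b3, b4⟩ := mm_bounds k n hk h2 h3 (by linarith) (by linarith)
  have : 2 * ((n : ℝ) * ww n) ≤ mm k n := by
    have : 0 ≤ (n : ℝ) * Real.log n := by positivity
    linarith [hw.2]
  exact_mod_cast this

lemma main_aux (k : ℕ) (hk : 2 ≤ k) (δ : ℝ) (hδ : 0 < δ) :
    Tendsto
      (fun n : ℕ => Pr (fun σ : Ord n =>
        ((buy (stOf (theRule n k (n * ww n) (2 * (n * ww n)))) σ (tau k σ)).card : ℝ) ≤
          ((k : ℝ) / 2 + (2 : ℝ) ^ (-(k : ℤ)) + δ) * n ∧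
        ∀ v : Fin n, k ≤ deg (buy (stOf (theRule n k (n * ww n) (2 * (n * ww n)))) σ (tau k σ)) v))
      atTop (nhds 1) := by
  set ε : ℝ := δ / (k + 1) with hεdef
  have hε : 0 < ε := by positivity
  have hεk : ε * (k + 1) = δ := by rw [hεdef]; field_simp
  have T1 := E1_tendsto k hk
  have T2 := E2_tendsto k hk
  have T3 := exc_tendsto k hk δ hδ
  have T4 := deficient_tendsto (fun n => theRule n k (n * ww n) (2 * (n * ww n))) 1 (fun _ => 0)
    (fun n => Nat.zero_le _) ε hε (by
      intro n i B e _ hi h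
      apply theRule_of_isolated (by omega)
      induction e using Sym2.ind with
      | _ x y => exact ⟨x, by simp, by have := h x (by simp); omega⟩)
  have T5 := deficient_tendsto (fun n => theRule n k (n * ww n) (2 * (n * ww n))) k
    (fun n => n * ww n) (fun n => le_rfl) ε hε (by
      intro n i B e h1 h2 h
      unfold theRule
      rw [if_neg (by omega), if_pos (by omega)]
      exact Or.inr h)
  have T := (((T1.add T2).add T3).add T4).add T5
  have T' := T.const_sub 1
  simp only [add_zero, sub_zero] at T'
  refine tendsto_of_tendsto_of_tendsto_of_le_of_le' T' tendsto_const_nhds ?_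
    (Eventually.of_forall fun n => Pr_le_one _)
  filter_upwards [M2_le_mm k hk, eventually_ge_atTop (k + 1)] with n hM hn
  refine le_trans (sub_le_sub_left ?_ 1) (Pr_compl _).ge
  refine le_trans (Pr_mono ?_) ((Pr_or _ _).trans (add_le_add_left ((Pr_or _ _).trans
    (add_le_add_left ((Pr_or _ _).trans (add_le_add_left (Pr_or _ _) _)) _)) _))
  intro σ
  contrapose!
  rintro ⟨⟨⟨⟨⟨v, hv⟩, hlate⟩, hexc⟩, hiso⟩, hdef⟩
  have hmt := tau_ge hn (by omega) σ (mm k n) v hv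
  rw [buy_stOf]
  refine ⟨?_, final_deg (by omega) (by omega) σ (mm k n) _ hmt hM (tau_spec hn σ) hlate⟩
  have hc := dfc_one_le (k := k) (M₁ := n * ww n) (M₂ := 2 * (n * ww n)) (by omega) (by omega) σ
    (tau k σ) (hM.trans hmt)
  rw [zero_add] at hiso
  rw [← two_mul] at hdef
  have d1 := dfc_le_dset 1 (deg (run (theRule n k (n * ww n) (2 * (n * ww n))) σ (n * ww n)))
  have d2 := dfc_le_dset k (deg (run (theRule n k (n * ww n) (2 * (n * ww n))) σ (2 * (n * ww n))))
  have q1 := (Nat.lt_ceil.1 hiso).le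
  have q2 := mul_le_mul_of_nonneg_left (Nat.lt_ceil.1 hdef).le (Nat.cast_nonneg (α := ℝ) k)
  have z : (2 : ℝ) ^ (-(k : ℤ)) = 1 / 2 ^ k := by rw [zpow_neg, zpow_natCast, one_div]
  have z2 : (2 : ℝ) / 2 ^ k = 2 * (1 / 2 ^ k) := by ring
  rw [z]
  rw [z2] at hexc
  have e2 : ε * n + k * (ε * n) = δ * n := by rw [← hεk]; ring
  push_cast at d1
  linarith

end RGP

namespace RGP

/-- For every integer `k ≥ 2` and constant `δ > 0`, Builder has a
deterministic online strategy (one for each `n`) such that, with high probability,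
she purchases at most `(k/2 + 2⁻ᵏ + δ)·n` edges among `e_1, …, e_{τ_k}` and her graph
`B_{τ_k}` has minimum degree at least `k`. -/
theorem builder_min_degree_k (k : ℕ) (hk : 2 ≤ k) (δ : ℝ) (hδ : 0 < δ) :
    ∃ st : (n : ℕ) → Strategy n,
      Filter.Tendsto
        (fun n : ℕ => Pr (fun σ : Ord n =>
          ((buy (st n) σ (tau k σ)).card : ℝ) ≤ ((k : ℝ) / 2 + (2 : ℝ) ^ (-(k : ℤ)) + δ) * n ∧
          ∀ v : Fin n, k ≤ deg (buy (st n) σ (tau k σ)) v))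
        Filter.atTop (nhds 1) := by
  exact ⟨_, main_aux k hk δ hδ⟩

end RGP
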